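/- arXiv:0712.1725 — 2 statements merged into one kernel-verified Lean document; each statement's English description precedes it below -/
import Mathlib

section
/- Let k be an algebraically closed field of characteristic 0 or p > 2, m a positive integer not divisible by the characteristic of k, and ζ ∈ k a primitive m-th root of unity. Let g ∈ Sp(2n,k) be such that Int g has order exactly m as an automorphism of Sp(2n,k), i.e. m is the least positive integer j with g^j = ±I. Set 𝔤(1) = {x ∈ sp(2n,k) : g·x·g⁻¹ = ζ·x} and H = {h ∈ Sp(2n,k) : h·g = g·h}. Let c be a Cartan subspace of 𝔤(1) and r = dim c. Then, with respect to a suitable basis of c, the little Weyl group of c with respect to H equals G(2m,1,r) if m is odd, and equals G(m,1,r) if m is even. -/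
/-!
Let `M = lcm 2 m`, so that `M = 2m` for odd `m` and `M = m` for even `m`. The weights of a Cartan
subspace `c` on `k²ⁿ` are permuted by the `M`-th roots of unity: the symplectic form pairs `χ` with
`-χ`, and `g` multiplies weights by `ζ`. Any function of the weights that is equivariant under
these roots defines a diagonal element of `𝔤(1)`, which lies in `c` by maximality. Hence `c` has a
basis of pairwise annihilating elements `x` with `x ^ (M + 1) = x`, and two such bases differ
exactly by a matrix in `G(M,1,r)`.

Conjugation by an element of `H` normalizing `c` maps such a basis to another one, so the little
Weyl group is contained in `G(M,1,r)`. Conversely, two such bases are conjugate under `H`. Choose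
eigenvectors `e`, `f` of each basis element for the eigenvalues `1` and `-1`, normalized so that
`B(e, f) = 1` and that some power `g ^ p` acts on all the planes `⟨e, f⟩` by the same rotation;
their translates under `g` then form a symplectic basis of the part of `k²ⁿ` on which `c` acts
nontrivially. Matching the symplectic bases attached to the two bases of `c`, and taking the
identity on the orthogonal complement, gives a symplectic map commuting with `g` and carrying one
basis of `c` to the other.
-/

open Matrix

/-- The group `G(m,q,r)` of `r×r` monomial matrices whose nonzero entries are
`m`-th roots of unity and the product of whose nonzero entries is an
`(m/q)`-th root of unity, as a set of matrices. -/
def GmqrSet (k : Type*) [Field k] (m q r : ℕ) : Set (Matrix (Fin r) (Fin r) k) :=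
  {w | ∃ σ : Equiv.Perm (Fin r),
    (∀ i j, i ≠ σ j → w i j = 0) ∧
    (∀ j, w (σ j) j ^ m = 1) ∧
    (∏ j, w (σ j) j) ^ (m / q) = 1}

/-- A matrix is semisimple if it is diagonalizable. -/
def IsSemisimpleMat {k : Type*} [Field k] {N : Type*} [Fintype N] [DecidableEq N]
    (x : Matrix N N k) : Prop :=
  ∃ P : Matrix N N k, IsUnit P.det ∧ (P * x * P⁻¹).IsDiag

/-- `c` is a Cartan subspace of `g1`: a subspace of `g1`, consisting of
pairwise commuting diagonalizable matrices, and maximal among such. -/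
def IsCartanSubspace {k : Type*} [Field k] {N : Type*} [Fintype N] [DecidableEq N]
    (g1 : Set (Matrix N N k)) (c : Submodule k (Matrix N N k)) : Prop :=
  (c : Set (Matrix N N k)) ⊆ g1 ∧
  (∀ x ∈ c, ∀ y ∈ c, x * y = y * x) ∧
  (∀ x ∈ c, IsSemisimpleMat x) ∧
  ∀ c' : Submodule k (Matrix N N k),
    ((c' : Set (Matrix N N k)) ⊆ g1 ∧ (∀ x ∈ c', ∀ y ∈ c', x * y = y * x) ∧
      (∀ x ∈ c', IsSemisimpleMat x)) → c ≤ c' → c' = c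

/-- The little Weyl group of `c` with respect to `H`, written with respect to
the family `b` (a basis of `c`): the set of matrices of the transformations
`x ↦ h·x·h⁻¹` of `c`, for `h ∈ H` normalizing `c`. -/
def littleWeylSet {k : Type*} [Field k] {N : Type*} [Fintype N] [DecidableEq N] {r : ℕ}
    (H : Set (Matrix N N k)) (c : Submodule k (Matrix N N k))
    (b : Fin r → Matrix N N k) : Set (Matrix (Fin r) (Fin r) k) :=
  {w | ∃ h ∈ H, (∀ x ∈ c, h * x * h⁻¹ ∈ c) ∧ (∀ x ∈ c, h⁻¹ * x * h ∈ c) ∧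
    ∀ j, h * b j * h⁻¹ = ∑ i, w i j • b i}

/-- The standard symplectic form matrix `Ω = [[0, Jₙ], [−Jₙ, 0]]` (with `Jₙ`
the antidiagonal matrix), written directly as a `2n×2n` matrix. -/
def omegaMat (k : Type*) [Field k] (n : ℕ) : Matrix (Fin (2 * n)) (Fin (2 * n)) k :=
  Matrix.of fun i j =>
    if (i : ℕ) + (j : ℕ) = 2 * n - 1 then (if (i : ℕ) < n then 1 else -1) else 0

section PotentBasis

variable {k A A' ι : Type*} [Field k] [Ring A] [Algebra k A] [Ring A'] [Algebra k A'] {M r : ℕ}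

/-- A potent basis of `c`: a basis consisting of pairwise annihilating elements `x` with
`x ^ (M + 1) = x`. These bases are rigid up to monomial matrices with entries `M`-th roots of
unity, see `IsPotentBasis.iff_mem_GmqrSet`. -/
structure IsPotentBasis (M : ℕ) (c : Submodule k A) (b : ι → A) : Prop where
  linearIndependent : LinearIndependent k b
  span_eq : Submodule.span k (Set.range b) = c
  mul_eq_zero : ∀ ⦃i j⦄, i ≠ j → b i * b j = 0
  pow_succ_eq (j : ι) : b j ^ (M + 1) = b j

theorem IsPotentBasis.map {c : Submodule k A} {b : ι → A} (hb : IsPotentBasis M c b)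
    (φ : A ≃ₐ[k] A') :
    IsPotentBasis M (c.map φ.toLinearMap) (φ ∘ b) where
  linearIndependent := hb.linearIndependent.map' φ.toLinearMap
    (LinearMap.ker_eq_bot.2 φ.injective)
  span_eq := by
    rw [← hb.span_eq, Submodule.map_span, ← Set.range_comp]; rfl
  mul_eq_zero i j hij := by
    rw [Function.comp_apply, Function.comp_apply, ← map_mul, hb.mul_eq_zero hij, map_zero]
  pow_succ_eq j := by
    rw [Function.comp_apply, ← map_pow, hb.pow_succ_eq]

theorem pow_mul_add_one_eq_of_pow_succ_eq {R : Type*} [Monoid R] {x : R}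
    (hx : x ^ (M + 1) = x) (p : ℕ) : x ^ (M * p + 1) = x := by
  induction p with
  | zero => simp
  | succ p ih => rw [mul_add, mul_one, add_right_comm, pow_add, ih, ← pow_succ', hx]

theorem pow_ne_zero_of_pow_succ_eq {R : Type*} [MonoidWithZero R] {x : R}
    (hx : x ^ (M + 1) = x) (hM : M ≠ 0) (hx0 : x ≠ 0) (p : ℕ) : x ^ p ≠ 0 := fun h =>
  hx0 <| by
    rw [← pow_mul_add_one_eq_of_pow_succ_eq hx p]
    exact pow_eq_zero_of_le (by nlinarith [Nat.pos_of_ne_zero hM]) h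

theorem mul_sum_smul_pow_of_mul_eq_zero [Fintype ι] {b : ι → A}
    (hb : ∀ ⦃i j⦄, i ≠ j → b i * b j = 0) (t : ι → k) (s : ι) (p : ℕ) :
    b s * (∑ i, t i • b i) ^ p = t s ^ p • b s ^ (p + 1) := by
  have hmul : b s * ∑ i, t i • b i = t s • b s ^ 2 := by
    rw [Finset.mul_sum, Finset.sum_eq_single s, mul_smul_comm, sq]
    · intro i _ hi
      rw [mul_smul_comm, hb hi.symm, smul_zero]
    · simp
  induction p with
  | zero => simp
  | succ p ih =>
    rw [pow_succ, ← mul_assoc, ih, smul_mul_assoc, pow_succ, mul_assoc, hmul, mul_smul_comm,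
      smul_smul, ← pow_succ, ← pow_add]

theorem mem_GmqrSet_one_of_pow_succ_eq {w : Matrix (Fin r) (Fin r) k}
    (hrow : ∀ i ⦃j l⦄, j ≠ l → w i j * w i l = 0) (hpow : ∀ i j, w i j ^ (M + 1) = w i j)
    (hcol : ∀ j, ∃ i, w i j ≠ 0) : w ∈ GmqrSet k M 1 r := by
  choose σ hσ using hcol
  have hinj : Function.Injective σ := fun j l hjl => by
    by_contra hne
    exact mul_ne_zero (hσ j) (hjl ▸ hσ l) (hrow (σ j) hne)
  have hroot : ∀ j, w (σ j) j ^ M = 1 := fun j =>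
    mul_right_cancel₀ (hσ j) (by rw [← pow_succ, hpow, one_mul])
  refine ⟨Equiv.ofBijective σ (Finite.injective_iff_bijective.1 hinj), fun i j hij => ?_,
    hroot, ?_⟩
  · obtain ⟨l, rfl⟩ := Finite.injective_iff_surjective.1 hinj i
    have hlj : l ≠ j := fun h => hij (by rw [h, Equiv.ofBijective_apply])
    exact (mul_eq_zero.1 (hrow (σ l) hlj)).resolve_left (hσ l)
  · rw [Nat.div_one, ← Finset.prod_pow]
    exact Finset.prod_eq_one fun j _ => hroot j

theorem IsPotentBasis.mem_GmqrSet (hM : M ≠ 0) {c : Submodule k A} {b : Fin r → A}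
    (hb : IsPotentBasis M c b) {w : Matrix (Fin r) (Fin r) k}
    (hw : IsPotentBasis M c fun j => ∑ i, w i j • b i) : w ∈ GmqrSet k M 1 r := by
  have hne (i p) : b i ^ p ≠ 0 :=
    pow_ne_zero_of_pow_succ_eq (hb.pow_succ_eq i) hM (hb.linearIndependent.ne_zero i) p
  have hcoord (i j p) := mul_sum_smul_pow_of_mul_eq_zero hb.mul_eq_zero (fun i => w i j) i p
  have hcoord_one (i j) : b i * ∑ s, w s j • b s = w i j • b i ^ 2 := by
    simpa only [pow_one] using hcoord i j 1
  refine mem_GmqrSet_one_of_pow_succ_eq (fun i j l hjl => ?_) (fun i j => ?_) fun j => ?_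
  · have hprod : (w i j * w i l) • b i ^ 3 = 0 := by
      calc (w i j * w i l) • b i ^ 3
          = w i j • (b i * (b i * ∑ s, w s l • b s)) := by
            rw [hcoord_one, mul_smul_comm, smul_smul, ← pow_succ']
        _ = w i j • b i ^ 2 * ∑ s, w s l • b s := by rw [smul_mul_assoc, sq, mul_assoc]
        _ = b i * ((∑ s, w s j • b s) * ∑ s, w s l • b s) := by rw [← hcoord_one, mul_assoc]
        _ = 0 := by rw [hw.mul_eq_zero hjl, mul_zero]
    exact (smul_eq_zero.1 hprod).resolve_right (hne i 3)
  · have hpow : w i j ^ (M + 1) • b i ^ 2 = w i j • b i ^ 2 := by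
      rw [← hcoord_one, ← hw.pow_succ_eq, hcoord, pow_succ _ (M + 1), hb.pow_succ_eq, ← sq]
    exact smul_left_injective k (hne i 2) hpow
  · by_contra! hzero
    exact hw.linearIndependent.ne_zero j (by simp [hzero])

theorem IsPotentBasis.of_mem_GmqrSet (hM : M ≠ 0) {c : Submodule k A} {b : Fin r → A}
    (hb : IsPotentBasis M c b) {w : Matrix (Fin r) (Fin r) k} (hw : w ∈ GmqrSet k M 1 r) :
    IsPotentBasis M c fun j => ∑ i, w i j • b i := by
  obtain ⟨σ, hσ, hroot, -⟩ := hw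
  have hsum (j) : ∑ i, w i j • b i = w (σ j) j • b (σ j) :=
    Finset.sum_eq_single _ (fun i _ hi => by rw [hσ i j hi, zero_smul]) (by simp)
  have hne (j) : w (σ j) j ≠ 0 := (IsUnit.of_pow_eq_one (hroot j) hM).ne_zero
  simp only [hsum]
  refine ⟨(hb.linearIndependent.comp σ σ.injective).units_smul fun j => Units.mk0 _ (hne j), ?_,
    fun i j hij => ?_, fun j => ?_⟩
  · rw [← hb.span_eq, ← σ.surjective.range_comp b]
    refine Submodule.span_eq_span ?_ ?_ <;> rintro _ ⟨j, rfl⟩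
    · exact Submodule.smul_mem _ _ (Submodule.subset_span ⟨j, rfl⟩)
    · exact (Submodule.smul_mem_iff _ (hne j)).1 (Submodule.subset_span ⟨j, rfl⟩)
  · rw [smul_mul_smul_comm, hb.mul_eq_zero (σ.injective.ne hij), smul_zero]
  · rw [smul_pow, hb.pow_succ_eq, pow_succ, hroot, one_mul]

theorem IsPotentBasis.iff_mem_GmqrSet (hM : M ≠ 0) {c : Submodule k A} {b : Fin r → A}
    (hb : IsPotentBasis M c b) {w : Matrix (Fin r) (Fin r) k} :
    IsPotentBasis M c (fun j => ∑ i, w i j • b i) ↔ w ∈ GmqrSet k M 1 r :=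
  ⟨hb.mem_GmqrSet hM, hb.of_mem_GmqrSet hM⟩

end PotentBasis

section Semisimple

open Module

variable {k V : Type*} [Field k] [AddCommGroup V] [Module k V]

theorem isSemisimple_of_basis_apply_eq_smul {ι : Type*} [Finite ι] (v : Basis ι k V) {d : ι → k}
    {x : End k V} (hx : ∀ a, x (v a) = d a • v a) : x.IsSemisimple := by
  classical
  have := Fintype.ofFinite ι
  let Q : Polynomial k := ∏ a ∈ Finset.univ.image d, (Polynomial.X - Polynomial.C a)
  have hQ : Squarefree Q :=
    (Polynomial.separable_prod_X_sub_C_iff' (f := fun a : k => a) |>.2 (by simp)).squarefree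
  refine End.isSemisimple_of_squarefree_aeval_eq_zero hQ (v.ext fun a => ?_)
  have hroot : Q.eval (d a) = 0 := by
    rw [Polynomial.eval_prod]
    exact Finset.prod_eq_zero (Finset.mem_image_of_mem d (Finset.mem_univ a)) (by simp)
  rw [End.aeval_apply_of_hasEigenvector ⟨End.mem_eigenspace_iff.2 (hx a), v.ne_zero a⟩, hroot,
    zero_smul, LinearMap.zero_apply]

theorem isSemisimple_of_pow_succ_eq {M : ℕ} (hM : (M : k) ≠ 0) {x : End k V}
    (hx : x ^ (M + 1) = x) : x.IsSemisimple := by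
  have hM0 : M ≠ 0 := by
    rintro rfl
    exact hM Nat.cast_zero
  have hcoprime : IsCoprime (Polynomial.X : Polynomial k) (Polynomial.X ^ M - 1) :=
    ⟨Polynomial.X ^ (M - 1), -1, by rw [← pow_succ, Nat.sub_add_cancel (by omega)]; ring⟩
  have hsep : (Polynomial.X * (Polynomial.X ^ M - 1) : Polynomial k).Separable :=
    Polynomial.separable_X.mul (Polynomial.X_pow_sub_one_separable_iff.2 hM) hcoprime
  refine End.isSemisimple_of_squarefree_aeval_eq_zero hsep.squarefree ?_
  simp [mul_sub, ← pow_succ', hx]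

variable [IsAlgClosed k] [FiniteDimensional k V]

theorem exists_basis_apply_eq_smul_of_commute (c : Submodule k (End k V))
    (hcomm : ∀ x ∈ c, ∀ y ∈ c, Commute x y) (hss : ∀ x ∈ c, x.IsSemisimple) :
    ∃ (v : Basis (Fin (finrank k V)) k V) (χ : Fin (finrank k V) → Dual k c),
      ∀ a (x : c), (x : End k V) (v a) = χ a x • v a := by
  have hgen := End.iSup_iInf_maxGenEigenspace_eq_top_of_iSup_maxGenEigenspace_eq_top_of_commute
    (fun x : c => (x : End k V)) (fun x y _ => hcomm x x.2 y y.2)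
    (fun x => End.iSup_maxGenEigenspace_eq_top _)
  have hspan : ⊤ ≤ Submodule.span k {v : V | ∀ x : c, ∃ t : k, (x : End k V) v = t • v} := by
    rw [← hgen]
    refine iSup_le fun χ v hv => Submodule.subset_span fun x => ⟨χ x, ?_⟩
    have hvx := (Submodule.mem_iInf _).1 hv x
    rw [(hss x x.2).isFinitelySemisimple.maxGenEigenspace_eq_eigenspace] at hvx
    exact End.mem_eigenspace_iff.1 hvx
  let v := (Basis.ofSpan hspan).reindex ((Basis.ofSpan hspan).indexEquiv (finBasis k V))
  have hv (a) (x : c) : ∃ t : k, (x : End k V) (v a) = t • v a := by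
    rw [Basis.reindex_apply]
    exact Basis.ofSpan_subset hspan ⟨_, rfl⟩ x
  refine ⟨v, fun a => v.coord a ∘ₗ LinearMap.applyₗ (v a) ∘ₗ c.subtype, fun a x => ?_⟩
  obtain ⟨t, ht⟩ := hv a x
  simp [ht]

theorem exists_basis_apply_eq_smul_of_isSemisimple {x : End k V} (hx : x.IsSemisimple) :
    ∃ (v : Basis (Fin (finrank k V)) k V) (d : Fin (finrank k V) → k),
      ∀ a, x (v a) = d a • v a := by
  obtain ⟨v, χ, hv⟩ := exists_basis_apply_eq_smul_of_commute (k ∙ x)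
    (fun y hy z hz => by
      obtain ⟨s, rfl⟩ := Submodule.mem_span_singleton.1 hy
      obtain ⟨t, rfl⟩ := Submodule.mem_span_singleton.1 hz
      exact ((Commute.refl x).smul_left s).smul_right t)
    (fun y hy => by
      obtain ⟨s, rfl⟩ := Submodule.mem_span_singleton.1 hy
      exact End.IsSemisimple_smul s hx)
  exact ⟨v, fun a => χ a ⟨x, Submodule.mem_span_singleton_self x⟩,
    fun a => hv a ⟨x, Submodule.mem_span_singleton_self x⟩⟩

end Semisimple

section SemisimpleMatrix

open Module

variable {k N : Type*} [Field k] [Fintype N] [DecidableEq N]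

theorem IsSemisimpleMat.isSemisimple_toLin' {x : Matrix N N k} (hx : IsSemisimpleMat x) :
    End.IsSemisimple (Matrix.toLin' x) := by
  obtain ⟨P, hP, hdiag⟩ := hx
  have hPP : P * P⁻¹ = 1 := Matrix.mul_nonsing_inv P hP
  have hPP' : P⁻¹ * P = 1 := Matrix.nonsing_inv_mul P hP
  rw [LinearEquiv.isSemisimple_iff _ (Matrix.toLin' (P * x * P⁻¹)) (Matrix.toLin'OfInv hPP' hPP)
    (LinearMap.ext fun v => by
      change Matrix.toLin' P (Matrix.toLin' x v) = Matrix.toLin' (P * x * P⁻¹) (Matrix.toLin' P v)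
      rw [← Matrix.toLin'_mul_apply, ← Matrix.toLin'_mul_apply, Matrix.mul_assoc _ P⁻¹, hPP',
        Matrix.mul_one])]
  refine isSemisimple_of_basis_apply_eq_smul (Pi.basisFun k N) (d := (P * x * P⁻¹).diag) fun i => ?_
  conv_lhs => rw [← hdiag.diagonal_diag]
  ext j
  obtain rfl | hij := eq_or_ne j i <;> simp [Matrix.mulVec_diagonal, *]

theorem isSemisimpleMat_toMatrix' [IsAlgClosed k] {x : End k (N → k)} (hx : x.IsSemisimple) :
    IsSemisimpleMat (LinearMap.toMatrix' x) := by
  obtain ⟨v, d, hv⟩ := exists_basis_apply_eq_smul_of_isSemisimple hx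
  let w := v.reindex (v.indexEquiv (Pi.basisFun k N))
  have hw (a) : ∃ t, x (w a) = t • w a := ⟨_, by rw [Basis.reindex_apply, hv]⟩
  have hinv := Basis.toMatrix_mul_toMatrix_flip w (Pi.basisFun k N)
  refine ⟨w.toMatrix (Pi.basisFun k N), (Matrix.isUnit_iff_isUnit_det _).1
    (IsUnit.of_mul_eq_one _ hinv), ?_⟩
  rw [Matrix.inv_eq_right_inv hinv, ← LinearMap.toMatrix_eq_toMatrix',
    basis_toMatrix_mul_linearMap_toMatrix_mul_basis_toMatrix]
  intro i j hij
  obtain ⟨t, ht⟩ := hw j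
  rw [LinearMap.toMatrix_apply, ht, map_smul, Basis.repr_self, Finsupp.smul_apply,
    Finsupp.single_eq_of_ne hij, smul_zero]

end SemisimpleMatrix

section GradedSkew

open Module

variable {k V : Type*} [Field k] [AddCommGroup V] [Module k V]

/-- The space `𝔤(1)` of `B`-skew endomorphisms `x` with `g x g⁻¹ = ζ x`, the last condition being
written as `g x = ζ x g`. -/
def gradedSkew (B : V →ₗ[k] V →ₗ[k] k) (g : End k V) (ζ : k) : Submodule k (End k V) :=
  B.skewAdjointSubmodule ⊓ LinearMap.eqLocus (LinearMap.mulLeft k g) (ζ • LinearMap.mulRight k g)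

variable {B : V →ₗ[k] V →ₗ[k] k} {g : End k V} {ζ : k}

theorem mem_gradedSkew {x : End k V} : x ∈ gradedSkew B g ζ ↔
    (∀ u v, B (x u) v = -B u (x v)) ∧ ∀ v, g (x v) = ζ • x (g v) := by
  refine and_congr ?_ LinearMap.ext_iff
  simp [LinearMap.IsSkewAdjoint, LinearMap.IsAdjointPair]

theorem apply_left_of_mem_gradedSkew {x : End k V} (hx : x ∈ gradedSkew B g ζ) (u v : V) :
    B (x u) v = -B u (x v) :=
  (mem_gradedSkew.1 hx).1 u v

theorem pow_apply_of_mem_gradedSkew {x : End k V} (hx : x ∈ gradedSkew B g ζ) (i : ℕ) (v : V) :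
    (g ^ i) (x v) = ζ ^ i • x ((g ^ i) v) := by
  induction i with
  | zero => simp
  | succ i ih =>
    rw [pow_succ', End.mul_apply, End.mul_apply, ih, map_smul, (mem_gradedSkew.1 hx).2, smul_smul,
      ← pow_succ]

theorem apply_pow_eq_zero_of_mem_gradedSkew {x : End k V} (hx : x ∈ gradedSkew B g ζ) {u v : V}
    {α β : k} (hu : x u = α • u) (hv : x v = β • v) {i : ℕ} (hne : ζ ^ i * α ≠ -β) :
    B u ((g ^ i) v) = 0 := by
  have hleft := apply_left_of_mem_gradedSkew hx u ((g ^ i) v)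
  have hright := congrArg (B u) (pow_apply_of_mem_gradedSkew hx i v)
  simp only [hu, hv, map_smul, LinearMap.smul_apply, smul_eq_mul] at hleft hright
  refine (mul_eq_zero.1 (?_ : (ζ ^ i * α + β) * B u ((g ^ i) v) = 0)).resolve_left fun h =>
    hne (eq_neg_of_add_eq_zero_left h)
  linear_combination ζ ^ i * hleft + hright

theorem mul_mem_gradedSkew {x y : End k V} (hx : x ∈ gradedSkew B g ζ)
    (hy : LinearMap.IsAdjointPair B B y y) (hgy : Commute g y) (hxy : Commute x y) :
    y * x ∈ gradedSkew B g ζ := by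
  refine mem_gradedSkew.2 ⟨fun u v => ?_, fun v => ?_⟩
  · rw [← hxy.eq, End.mul_apply, apply_left_of_mem_gradedSkew hx, hy, hxy.eq, End.mul_apply]
  · calc g (y (x v)) = y (g (x v)) := LinearMap.congr_fun hgy.eq (x v)
      _ = ζ • y (x (g v)) := by rw [(mem_gradedSkew.1 hx).2, map_smul]

end GradedSkew

section Cartan

open Module

/-- The coordinate on the `M`-th roots of unity multiples of `χ₀`: the scalar `ω` with
`ω ^ M = 1` and `χ = ω • χ₀` if there is one, and `0` otherwise. -/
noncomputable def orbitCoord {k W : Type*} [Field k] [AddCommGroup W] [Module k W] (M : ℕ)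
    (χ₀ χ : W) : k :=
  open scoped Classical in
  if h : ∃ ω : k, ω ^ M = 1 ∧ χ = ω • χ₀ then h.choose else 0

section OrbitCoord

variable {k W : Type*} [Field k] [AddCommGroup W] [Module k W] {M : ℕ} {χ₀ χ : W}

theorem orbitCoord_ne_zero (h : orbitCoord (k := k) M χ₀ χ ≠ 0) :
    orbitCoord (k := k) M χ₀ χ ^ M = 1 ∧ χ = orbitCoord (k := k) M χ₀ χ • χ₀ := by
  unfold orbitCoord at h ⊢
  split_ifs at h ⊢ with hχ
  · exact hχ.choose_spec
  · exact absurd rfl h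

theorem orbitCoord_pow_succ : orbitCoord (k := k) M χ₀ χ ^ (M + 1) = orbitCoord M χ₀ χ := by
  by_cases h : orbitCoord (k := k) M χ₀ χ = 0
  · rw [h, zero_pow M.succ_ne_zero]
  · rw [pow_succ, (orbitCoord_ne_zero h).1, one_mul]

theorem orbitCoord_smul_self (h₀ : χ₀ ≠ 0) {ω : k} (hω : ω ^ M = 1) :
    orbitCoord M χ₀ (ω • χ₀) = ω := by
  have h : ∃ τ : k, τ ^ M = 1 ∧ ω • χ₀ = τ • χ₀ := ⟨ω, hω, rfl⟩
  rw [orbitCoord, dif_pos h]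
  exact (smul_left_injective k h₀ h.choose_spec.2).symm

theorem orbitCoord_smul (hM : M ≠ 0) (h₀ : χ₀ ≠ 0) {ω : k} (hω : ω ^ M = 1) :
    orbitCoord M χ₀ (ω • χ) = ω * orbitCoord M χ₀ χ := by
  have hω₀ : ω ≠ 0 := (IsUnit.of_pow_eq_one hω hM).ne_zero
  by_cases hχ : orbitCoord (k := k) M χ₀ χ = 0
  · rw [hχ, mul_zero]
    by_contra h
    obtain ⟨hτ, hωχ⟩ := orbitCoord_ne_zero h
    set τ : k := orbitCoord M χ₀ (ω • χ)
    have hχ₀ : χ = (ω⁻¹ * τ) • χ₀ := by rw [mul_smul, ← hωχ, inv_smul_smul₀ hω₀]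
    have hroot : (ω⁻¹ * τ) ^ M = 1 := by rw [mul_pow, inv_pow, hω, hτ, inv_one, one_mul]
    rw [hχ₀, orbitCoord_smul_self h₀ hroot] at hχ
    exact mul_ne_zero (inv_ne_zero hω₀) h hχ
  · obtain ⟨hτ, hχ₀⟩ := orbitCoord_ne_zero hχ
    conv_lhs => rw [hχ₀]
    rw [smul_smul, orbitCoord_smul_self h₀ (by rw [mul_pow, hω, hτ, one_mul])]

end OrbitCoord

theorem exists_basis_coord_eq {k W ι : Type*} [Field k] [AddCommGroup W] [Module k W]
    [FiniteDimensional k W] {χ : ι → Dual k W} (hχ : ∀ w, (∀ a, χ a w = 0) → w = 0) :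
    ∃ (b : Basis (Fin (finrank k W)) k W) (a : Fin (finrank k W) → ι),
      ∀ j, b.coord j = χ (a j) := by
  have hbot : (Submodule.span k (Set.range χ)).dualCoannihilator = ⊥ :=
    (Submodule.eq_bot_iff _).2 fun w hw => hχ w fun a =>
      (Submodule.mem_dualCoannihilator w).1 hw _ (Submodule.subset_span ⟨a, rfl⟩)
  have hspan : ⊤ ≤ Submodule.span k (Set.range χ) := by
    rw [← Subspace.dualCoannihilator_dualAnnihilator_eq (W := Submodule.span k (Set.range χ)),
      hbot, Submodule.dualAnnihilator_bot]
  let β := (Basis.ofSpan hspan).reindex ((Basis.ofSpan hspan).indexEquiv (finBasis k W).dualBasis)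
  have hβ (j) : β j ∈ Set.range χ := by
    rw [Basis.reindex_apply]
    exact Basis.ofSpan_subset hspan ⟨_, rfl⟩
  choose a ha using hβ
  let b : Basis (Fin (finrank k W)) k W := β.dualBasis.map (evalEquiv k W).symm
  refine ⟨b, a, fun j => b.ext fun i => ?_⟩
  rw [ha, Basis.coord_apply, Basis.repr_self, Basis.map_apply, apply_evalEquiv_symm_apply,
    Basis.dualBasis_apply_self, Finsupp.single_apply]
  simp only [eq_comm]

variable {k V : Type*} [Field k] [AddCommGroup V] [Module k V]

/-- `c` is a Cartan subspace of `𝔞`: it is maximal among the subspaces of `𝔞` consisting of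
pairwise commuting semisimple endomorphisms. Maximality is stated elementwise. -/
structure IsCartanSubmodule (𝔞 c : Submodule k (End k V)) : Prop where
  le : c ≤ 𝔞
  commute : ∀ x ∈ c, ∀ y ∈ c, Commute x y
  isSemisimple : ∀ x ∈ c, x.IsSemisimple
  mem_of_commute : ∀ y ∈ 𝔞, y.IsSemisimple → (∀ x ∈ c, Commute x y) → y ∈ c

theorem isCartanSubmodule_of_maximal [PerfectField k] [FiniteDimensional k V]
    {𝔞 c : Submodule k (End k V)} (hle : c ≤ 𝔞)
    (hcomm : ∀ x ∈ c, ∀ y ∈ c, Commute x y) (hss : ∀ x ∈ c, x.IsSemisimple)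
    (hmax : ∀ c' ≤ 𝔞, (∀ x ∈ c', ∀ y ∈ c', Commute x y) → (∀ x ∈ c', x.IsSemisimple) →
      c ≤ c' → c' = c) :
    IsCartanSubmodule 𝔞 c := by
  refine ⟨hle, hcomm, hss, fun y hy hyss hyc => ?_⟩
  have hmem {z : End k V} (hz : z ∈ c ⊔ k ∙ y) : ∃ x ∈ c, ∃ t : k, x + t • y = z := by
    obtain ⟨x, hx, w, hw, rfl⟩ := Submodule.mem_sup.1 hz
    obtain ⟨t, rfl⟩ := Submodule.mem_span_singleton.1 hw
    exact ⟨x, hx, t, rfl⟩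
  rw [← hmax (c ⊔ k ∙ y) (sup_le hle ((Submodule.span_singleton_le_iff_mem y 𝔞).2 hy)) ?_ ?_
    le_sup_left]
  · exact Submodule.mem_sup_right (Submodule.mem_span_singleton_self y)
  · intro z hz z' hz'
    obtain ⟨x, hx, t, rfl⟩ := hmem hz
    obtain ⟨x', hx', t', rfl⟩ := hmem hz'
    exact ((hcomm x hx x' hx').add_right ((hyc x hx).smul_right t')).add_left
      (((hyc x' hx').symm.add_right ((Commute.refl y).smul_right t')).smul_left t)
  · intro z hz
    obtain ⟨x, hx, t, rfl⟩ := hmem hz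
    exact (hss x hx).add_of_commute ((hyc x hx).smul_right t) (End.IsSemisimple_smul t hyss)

variable {B : V →ₗ[k] V →ₗ[k] k} {g : End k V} {ζ : k} {c : Submodule k (End k V)} {M : ℕ}

theorem coord_apply_of_basis_apply_eq_smul {ι : Type*} (v : Basis ι k V) {d : ι → k} {y : End k V}
    (hy : ∀ a, y (v a) = d a • v a) (a : ι) (w : V) : v.coord a (y w) = d a * v.coord a w := by
  suffices v.coord a ∘ₗ y = d a • v.coord a from LinearMap.congr_fun this w
  refine v.ext fun i => ?_
  obtain rfl | hia := eq_or_ne i a <;> simp [*]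

theorem diagonal_mem_gradedSkew (hc : c ≤ gradedSkew B g ζ) {ι : Type*} (v : Basis ι k V)
    {χ : ι → Dual k c} (hv : ∀ a (x : c), (x : End k V) (v a) = χ a x • v a)
    {d : Dual k c → k} (hneg : ∀ χ, d (-χ) = -d χ) (hsmul : ∀ χ, d (ζ • χ) = ζ * d χ)
    {D : End k V} (hD : ∀ a, D (v a) = d (χ a) • v a) : D ∈ gradedSkew B g ζ := by
  refine mem_gradedSkew.2 ⟨?_, ?_⟩
  · suffices B ∘ₗ D = -B.compl₂ D from fun u w => LinearMap.congr_fun₂ this u w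
    refine LinearMap.ext_basis v v fun a b => ?_
    by_cases hab : B (v a) (v b) = 0
    · simp [hD, hab]
    · have hχ : χ a = -χ b := by
        ext x
        have hx := apply_left_of_mem_gradedSkew (hc x.2) (v a) (v b)
        simp only [hv, map_smul, LinearMap.smul_apply, smul_eq_mul, ← neg_mul] at hx
        exact mul_right_cancel₀ hab hx
      simp [hD, hχ, hneg]
  · suffices g ∘ₗ D = ζ • D ∘ₗ g from LinearMap.congr_fun this
    refine v.ext fun a => v.ext_elem fun b => ?_
    suffices v.coord b (g (D (v a))) = ζ * v.coord b (D (g (v a))) by simpa using this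
    rw [coord_apply_of_basis_apply_eq_smul v hD, hD, map_smul, map_smul, smul_eq_mul]
    by_cases hab : v.coord b (g (v a)) = 0
    · simp [hab]
    · have hχ : χ a = ζ • χ b := by
        ext x
        have hx := congrArg (v.coord b) ((mem_gradedSkew.1 (hc x.2)).2 (v a))
        rw [map_smul, coord_apply_of_basis_apply_eq_smul v (fun a => hv a x), hv, map_smul,
          map_smul, smul_eq_mul, smul_eq_mul, ← mul_assoc] at hx
        exact mul_right_cancel₀ hab hx
      rw [hχ, hsmul, mul_assoc]

theorem IsCartanSubmodule.exists_apply_eq_orbitCoord (hM : M ≠ 0) (hMeven : Even M)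
    (hζ : ζ ^ M = 1) (hc : IsCartanSubmodule (gradedSkew B g ζ) c) {ι : Type*} [Finite ι]
    (v : Basis ι k V) {χ : ι → Dual k c} (hv : ∀ a (x : c), (x : End k V) (v a) = χ a x • v a)
    {χ₀ : Dual k c} (h₀ : χ₀ ≠ 0) : ∃ y : c, ∀ a, χ a y = orbitCoord M χ₀ (χ a) := by
  let D : End k V := v.constr k fun a => (orbitCoord M χ₀ (χ a) : k) • v a
  have hD (a) : D (v a) = (orbitCoord M χ₀ (χ a) : k) • v a := v.constr_basis k _ a
  have hneg (χ : Dual k c) : (orbitCoord M χ₀ (-χ) : k) = -orbitCoord M χ₀ χ := by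
    rw [← neg_one_smul k χ, orbitCoord_smul hM h₀ hMeven.neg_one_pow, neg_one_mul]
  have hDc : D ∈ c := by
    refine hc.mem_of_commute D (diagonal_mem_gradedSkew hc.le v hv hneg
      (fun _ => orbitCoord_smul hM h₀ hζ) hD) (isSemisimple_of_basis_apply_eq_smul v hD)
      fun x hx => v.ext fun a => ?_
    rw [End.mul_apply, End.mul_apply, hD, map_smul, hv a ⟨x, hx⟩, map_smul, hD, smul_comm]
  exact ⟨⟨D, hDc⟩, fun a =>
    smul_left_injective k (v.ne_zero a) ((hv a ⟨D, hDc⟩).symm.trans (hD a))⟩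

theorem IsCartanSubmodule.exists_basis_weight_eq_orbitCoord (hM : M ≠ 0) (hMeven : Even M)
    (hζ : ζ ^ M = 1) [FiniteDimensional k V] (hc : IsCartanSubmodule (gradedSkew B g ζ) c)
    {ι : Type*} [Finite ι] (v : Basis ι k V) {χ : ι → Dual k c}
    (hv : ∀ a (x : c), (x : End k V) (v a) = χ a x • v a) :
    ∃ β : Basis (Fin (finrank k c)) k c, ∀ l j, χ l (β j) = orbitCoord M (β.coord j) (χ l) := by
  obtain ⟨β, a, hβ⟩ := exists_basis_coord_eq (χ := χ) fun x hx =>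
    Subtype.ext (v.ext fun i => by rw [hv, hx, zero_smul]; rfl)
  refine ⟨β, fun l j => ?_⟩
  have hcoord (i j) : β.coord i (β j) = if j = i then 1 else 0 := by
    rw [Basis.coord_apply, Basis.repr_self, Finsupp.single_apply]
  have hne : β.coord j ≠ 0 := fun h => one_ne_zero (α := k) <| by
    simpa [h] using (hcoord j j).symm
  obtain ⟨y, hy⟩ := hc.exists_apply_eq_orbitCoord hM hMeven hζ v hv hne
  suffices y = β j by rw [← this, hy]
  refine β.ext_elem fun i => ?_
  rw [← Basis.coord_apply, ← Basis.coord_apply, hcoord, hβ i, hy, ← hβ i]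
  split_ifs with hij
  · simpa [hij] using orbitCoord_smul_self hne (one_pow (M := k) M)
  · by_contra h
    have hii := LinearMap.congr_fun (orbitCoord_ne_zero h).2 (β i)
    rw [LinearMap.smul_apply, hcoord, hcoord, if_pos rfl, if_neg (Ne.symm hij), smul_zero] at hii
    exact one_ne_zero hii

theorem IsCartanSubmodule.exists_isPotentBasis [IsAlgClosed k] [FiniteDimensional k V]
    (hM : M ≠ 0) (hMeven : Even M) (hζ : ζ ^ M = 1)
    (hc : IsCartanSubmodule (gradedSkew B g ζ) c) :
    ∃ b : Fin (finrank k c) → End k V, IsPotentBasis M c b := by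
  obtain ⟨v, χ, hv⟩ := exists_basis_apply_eq_smul_of_commute c hc.commute hc.isSemisimple
  obtain ⟨β, hβ⟩ := hc.exists_basis_weight_eq_orbitCoord hM hMeven hζ v hv
  refine ⟨fun j => β j, β.linearIndependent.map' c.subtype c.ker_subtype, ?_, fun i j hij => ?_,
    fun j => ?_⟩
  · change Submodule.span k (Set.range (c.subtype ∘ β)) = c
    rw [Set.range_comp, Submodule.span_image, β.span_eq, Submodule.map_subtype_top]
  · refine v.ext fun l => ?_
    rw [End.mul_apply, hv, map_smul, hv, smul_smul, LinearMap.zero_apply]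
    by_contra h
    obtain ⟨hj, hi⟩ := mul_ne_zero_iff.1 (left_ne_zero_of_smul h)
    rw [hβ] at hi hj
    have hii := LinearMap.congr_fun
      ((orbitCoord_ne_zero hi).2.symm.trans (orbitCoord_ne_zero hj).2) (β i)
    simp [Finsupp.single_eq_of_ne hij.symm, hi] at hii
  · refine v.ext fun l => ?_
    have heig : (β j : End k V).HasEigenvector (χ l (β j)) (v l) :=
      ⟨End.mem_eigenspace_iff.2 (hv l (β j)), v.ne_zero l⟩
    rw [heig.pow_apply, hv, hβ, orbitCoord_pow_succ]

end Cartan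

section AdaptedPair

open Module

variable {k V : Type*} [Field k] [AddCommGroup V] [Module k V]

theorem natCast_lcm_two_ne_zero {R : Type*} [CommRing R] [IsDomain R] (h2 : (2 : R) ≠ 0) {m : ℕ}
    [NeZero m] {ζ : R} (hζ : IsPrimitiveRoot ζ m) : (Nat.lcm 2 m : R) ≠ 0 := by
  have := hζ.neZero'
  refine right_ne_zero_of_mul (a := (Nat.gcd 2 m : R)) ?_
  rw [← Nat.cast_mul, Nat.gcd_mul_lcm, Nat.cast_mul]
  exact mul_ne_zero h2 (NeZero.ne _)

theorem exists_eq_pow_or_eq_neg_pow_of_pow_lcm_two_eq_one {m : ℕ} [NeZero m] {ζ : k}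
    (hζ : IsPrimitiveRoot ζ m) {ω : k} (hω : ω ^ Nat.lcm 2 m = 1) :
    ∃ i : ℕ, ω = ζ ^ i ∨ ω = -ζ ^ i := by
  have hsign : ω ^ m = 1 ∨ (-ω) ^ m = 1 := by
    obtain heven | hodd := m.even_or_odd
    · rw [Nat.lcm_eq_right heven.two_dvd] at hω
      exact Or.inl hω
    · rw [(Nat.coprime_two_left.2 hodd).lcm_eq_mul, mul_comm, pow_mul] at hω
      rw [hodd.neg_pow, neg_eq_iff_eq_neg]
      exact sq_eq_one_iff.1 hω
  obtain h | h := hsign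
  · obtain ⟨i, -, hi⟩ := hζ.eq_pow_of_pow_eq_one h
    exact ⟨i, Or.inl hi.symm⟩
  · obtain ⟨i, -, hi⟩ := hζ.eq_pow_of_pow_eq_one h
    exact ⟨i, Or.inr (by rw [hi, neg_neg])⟩

variable {B : V →ₗ[k] V →ₗ[k] k} {g : End k V} {ζ : k} {M m : ℕ}

theorem apply_pow_pow_of_isometry (hg : ∀ u v, B (g u) (g v) = B u v) (i : ℕ) (u v : V) :
    B ((g ^ i) u) ((g ^ i) v) = B u v := by
  induction i with
  | zero => rfl
  | succ i ih => rw [pow_succ', End.mul_apply, End.mul_apply, hg, ih]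

theorem injective_of_isometry (hB : B.SeparatingLeft) (hg : ∀ u v, B (g u) (g v) = B u v) :
    Function.Injective g :=
  (injective_iff_map_eq_zero g).2 fun u hu => hB u fun v => by
    rw [← hg, hu, map_zero, LinearMap.zero_apply]

theorem exists_apply_eq_neg_of_apply_eq_self (hB : B.SeparatingLeft) (hM : (M : k) ≠ 0)
    (hMeven : Even M) {y : End k V} (hy : ∀ u v, B (y u) v = -B u (y v)) (hpow : y ^ (M + 1) = y)
    {e : V} (he₀ : e ≠ 0) (he : y e = e) : ∃ f, y f = -f ∧ B e f = 1 := by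
  obtain ⟨w, hw⟩ : ∃ w, B e w ≠ 0 := by
    by_contra! h
    exact he₀ (hB e h)
  have hz : (-y) ^ (M + 1) = -y := by rw [hMeven.add_one.neg_pow, hpow]
  let f₀ := ∑ l ∈ Finset.range M, ((-y) ^ (l + 1)) w
  have hyf₀ : (-y) f₀ = f₀ := by
    have hshift : (-y) f₀ = ∑ l ∈ Finset.range M, ((-y) ^ (l + 1 + 1)) w := by
      rw [map_sum]
      exact Finset.sum_congr rfl fun l _ => by rw [pow_succ' _ (l + 1), End.mul_apply]
    have htel := Finset.sum_range_sub (fun l => ((-y) ^ (l + 1)) w) M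
    rw [Finset.sum_sub_distrib, hz, zero_add, pow_one, sub_self] at htel
    rw [hshift, sub_eq_zero.1 htel]
  have hBpow (l : ℕ) : B e (((-y) ^ l) w) = B e w := by
    induction l with
    | zero => rfl
    | succ l ih => rw [pow_succ', End.mul_apply, LinearMap.neg_apply, map_neg, ← hy, he, ih]
  have hBf₀ : B e f₀ = M * B e w := by
    simp only [f₀, map_sum, hBpow, Finset.sum_const, Finset.card_range, nsmul_eq_mul]
  refine ⟨(M * B e w)⁻¹ • f₀, ?_, ?_⟩
  · rw [map_smul, ← smul_neg, ← neg_eq_iff_eq_neg.1 hyf₀]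
  · rw [map_smul, hBf₀, smul_eq_mul, inv_mul_cancel₀ (mul_ne_zero hM hw)]

theorem exists_apply_eq_self [IsAlgClosed k] [FiniteDimensional k V] [NeZero m]
    (hB : B.SeparatingLeft) (hg : ∀ u v, B (g u) (g v) = B u v) (hζ : IsPrimitiveRoot ζ m)
    (hM : (Nat.lcm 2 m : k) ≠ 0) {y : End k V} (hy : y ∈ gradedSkew B g ζ)
    (hpow : y ^ (Nat.lcm 2 m + 1) = y) (hy₀ : y ≠ 0) : ∃ e ≠ 0, y e = e := by
  obtain ⟨v, d, hv⟩ := exists_basis_apply_eq_smul_of_isSemisimple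
    (isSemisimple_of_pow_succ_eq hM hpow)
  obtain ⟨a, ha⟩ : ∃ a, d a ≠ 0 := by
    by_contra! h
    exact hy₀ (v.ext fun a => by rw [hv, h, zero_smul, LinearMap.zero_apply])
  have hroot : d a ^ Nat.lcm 2 m = 1 := by
    have heig : y.HasEigenvector (d a) (v a) := ⟨End.mem_eigenspace_iff.2 (hv a), v.ne_zero a⟩
    have hsucc := heig.pow_apply (Nat.lcm 2 m + 1)
    rw [hpow, hv] at hsucc
    refine mul_right_cancel₀ ha ?_
    rw [← pow_succ, one_mul]
    exact (smul_left_injective k (v.ne_zero a) hsucc).symm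
  obtain ⟨i, hi⟩ := exists_eq_pow_or_eq_neg_pow_of_pow_lcm_two_eq_one hζ hroot
  have hu₀ : (g ^ i) (v a) ≠ 0 := fun h => v.ne_zero a <|
    (injective_of_isometry hB (apply_pow_pow_of_isometry hg i)) (by rw [h, map_zero])
  have hζi : ζ ^ i ≠ 0 := pow_ne_zero i (hζ.ne_zero (NeZero.ne m))
  have hu := pow_apply_of_mem_gradedSkew hy i (v a)
  rw [hv, map_smul] at hu
  obtain hi | hi := hi <;> rw [hi] at hu
  · exact ⟨_, hu₀, (smul_right_injective V hζi hu).symm⟩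
  · have hneg : (-y) ((g ^ i) (v a)) = (g ^ i) (v a) := by
      rw [neg_smul, ← smul_neg] at hu
      rw [LinearMap.neg_apply, ← smul_right_injective V hζi hu, neg_neg]
    have hMeven : Even (Nat.lcm 2 m) := even_iff_two_dvd.2 (Nat.dvd_lcm_left 2 m)
    obtain ⟨f, hf, hBf⟩ := exists_apply_eq_neg_of_apply_eq_self hB hM hMeven
      (apply_left_of_mem_gradedSkew (neg_mem hy)) (by rw [hMeven.add_one.neg_pow, hpow]) hu₀ hneg
    refine ⟨f, fun h => ?_, neg_injective hf⟩
    rw [h, map_zero] at hBf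
    exact zero_ne_one hBf

/-- A hyperbolic pair adapted to `y`: eigenvectors `e`, `f` of `y` for `1` and `-1` with
`B e f = 1`, whose span is mapped to itself by `g ^ p` (by a rotation, the same one for all the
pairs that are going to be compared), and whose first `p` translates under `g` are isotropic in the
sense that `B e (g ^ i e) = 0 = B f (g ^ i f)`. -/
structure IsAdaptedPair (B : V →ₗ[k] V →ₗ[k] k) (g : End k V) (p : ℕ) (ε τ : k) (y : End k V)
    (e f : V) : Prop where
  apply_left : y e = e
  apply_right : y f = -f
  form_eq_one : B e f = 1
  pow_left : (g ^ p) e = ε • e + τ • f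
  pow_right : (g ^ p) f = ε • f - τ • e
  isotropic_left : ∀ i < p, B e ((g ^ i) e) = 0
  isotropic_right : ∀ i < p, B f ((g ^ i) f) = 0

theorem apply_pow_self_eq_zero (halt : B.IsAlt) (hg : ∀ u v, B (g u) (g v) = B u v)
    (h2 : (2 : k) ≠ 0) {i : ℕ} (hgi : g ^ (2 * i) = 1) (u : V) : B u ((g ^ i) u) = 0 := by
  have h : B u ((g ^ i) u) = -B u ((g ^ i) u) := by
    conv_lhs => rw [← apply_pow_pow_of_isometry hg i]
    rw [halt.neg, ← End.mul_apply, ← pow_add, ← two_mul, hgi, End.one_apply]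
  exact (mul_eq_zero.1 (by linear_combination h : 2 * B u ((g ^ i) u) = 0)).resolve_left h2

variable [IsAlgClosed k] [FiniteDimensional k V] [NeZero m]

theorem exists_isAdaptedPair_of_isotropic (halt : B.IsAlt) (hB : B.SeparatingLeft)
    (hg : ∀ u v, B (g u) (g v) = B u v) (h2 : (2 : k) ≠ 0) (hζ : IsPrimitiveRoot ζ m)
    {ε : k} (hgm : g ^ m = ε • 1)
    (hiso : ∀ i, ζ ^ i = -1 → g ^ (2 * i) = 1) {y : End k V} (hy : y ∈ gradedSkew B g ζ)
    (hpow : y ^ (Nat.lcm 2 m + 1) = y) (hy₀ : y ≠ 0) :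
    ∃ e f, IsAdaptedPair B g m ε 0 y e f := by
  obtain ⟨e, he₀, he⟩ := exists_apply_eq_self hB hg hζ (natCast_lcm_two_ne_zero h2 hζ) hy hpow hy₀
  obtain ⟨f, hf, hBf⟩ := exists_apply_eq_neg_of_apply_eq_self hB (natCast_lcm_two_ne_zero h2 hζ)
    (even_iff_two_dvd.2 (Nat.dvd_lcm_left 2 m)) (apply_left_of_mem_gradedSkew hy) hpow he₀ he
  have hisotropic {α : k} (hα : α ≠ 0) {u : V} (hu : y u = α • u) (i : ℕ) :
      B u ((g ^ i) u) = 0 := by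
    by_cases hi : ζ ^ i = -1
    · exact apply_pow_self_eq_zero halt hg h2 (hiso i hi) u
    · refine apply_pow_eq_zero_of_mem_gradedSkew hy hu hu fun h => hi ?_
      exact mul_right_cancel₀ hα (by rw [h, neg_one_mul])
  exact ⟨e, f, he, hf, hBf, by simp [hgm], by simp [hgm],
    fun i _ => hisotropic one_ne_zero (by rw [he, one_smul]) i,
    fun i _ => hisotropic (neg_ne_zero.2 one_ne_zero) (by rw [hf, neg_one_smul]) i⟩

theorem exists_form_pow_ne_zero (halt : B.IsAlt) (hB : B.SeparatingLeft)
    (hg : ∀ u v, B (g u) (g v) = B u v) (h2 : (2 : k) ≠ 0) (hζ : IsPrimitiveRoot ζ m)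
    {s : ℕ} (hζs : ζ ^ s = -1) (hgs : g ^ (2 * s) = -1)
    {y : End k V} (hy : y ∈ gradedSkew B g ζ) (hpow : y ^ (Nat.lcm 2 m + 1) = y) (hy₀ : y ≠ 0) :
    ∃ w, y w = w ∧ B w ((g ^ s) w) ≠ 0 := by
  obtain ⟨e, he₀, he⟩ := exists_apply_eq_self hB hg hζ (natCast_lcm_two_ne_zero h2 hζ) hy hpow hy₀
  obtain ⟨f, hf, hBf⟩ := exists_apply_eq_neg_of_apply_eq_self hB (natCast_lcm_two_ne_zero h2 hζ)
    (even_iff_two_dvd.2 (Nat.dvd_lcm_left 2 m)) (apply_left_of_mem_gradedSkew hy) hpow he₀ he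
  by_contra! hzero
  let u := (g ^ s) f
  have hu : y u = u := by
    have h := pow_apply_of_mem_gradedSkew hy s f
    rw [hf, hζs, map_neg, neg_one_smul] at h
    exact (neg_injective h).symm
  have hgu : (g ^ s) u = -f := by
    rw [← End.mul_apply, ← pow_add, ← two_mul, hgs, LinearMap.neg_apply, End.one_apply]
  have hue : B u ((g ^ s) e) = -1 := by
    rw [apply_pow_pow_of_isometry hg, ← halt.neg, hBf]
  have huf : B u f = 0 := by simpa [hgu] using hzero u hu
  have hpolar := hzero (e + u) (by rw [map_add, he, hu])
  simp only [map_add, LinearMap.add_apply, hzero e he, hue, hgu, map_neg, hBf, huf] at hpolar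
  exact h2 (by linear_combination -hpolar)

theorem exists_isAdaptedPair_of_pow_eq_neg_one (halt : B.IsAlt) (hB : B.SeparatingLeft)
    (hg : ∀ u v, B (g u) (g v) = B u v) (h2 : (2 : k) ≠ 0) (hζ : IsPrimitiveRoot ζ m)
    {s : ℕ} (hms : m = 2 * s) (hgs : g ^ (2 * s) = -1)
    {y : End k V} (hy : y ∈ gradedSkew B g ζ) (hpow : y ^ (Nat.lcm 2 m + 1) = y) (hy₀ : y ≠ 0) :
    ∃ e f, IsAdaptedPair B g s 0 1 y e f := by
  have hζs : ζ ^ s = -1 := (hζ.pow (NeZero.pos m) (by rw [hms, mul_comm])).eq_neg_one_of_two_right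
  obtain ⟨w, hw, hBw⟩ := exists_form_pow_ne_zero halt hB hg h2 hζ hζs hgs hy hpow hy₀
  obtain ⟨t, ht⟩ := IsAlgClosed.exists_pow_nat_eq (B w ((g ^ s) w))⁻¹ two_pos
  let e := t • w
  have he : y e = e := by rw [map_smul, hw]
  have hisotropic : ∀ i < s, B e ((g ^ i) e) = 0 := fun i hi => by
    refine apply_pow_eq_zero_of_mem_gradedSkew hy (α := 1) (β := 1) (by rw [he, one_smul])
      (by rw [he, one_smul]) fun h => ?_
    rw [mul_one, ← hζs] at h
    exact hi.ne (hζ.pow_inj (by omega) (by omega) h)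
  refine ⟨e, (g ^ s) e, he, ?_, ?_, by simp, ?_, hisotropic, fun i hi => ?_⟩
  · have h := pow_apply_of_mem_gradedSkew hy s e
    rw [he, hζs, neg_one_smul] at h
    exact (neg_eq_iff_eq_neg.2 h).symm
  · simp only [e, map_smul, LinearMap.smul_apply, smul_eq_mul]
    rw [← mul_assoc, ← sq, ht, inv_mul_cancel₀ hBw]
  · rw [← End.mul_apply, ← pow_add, ← two_mul, hgs]
    simp
  · rw [← End.mul_apply, (Commute.refl g).pow_pow i s |>.eq, End.mul_apply,
      apply_pow_pow_of_isometry hg, hisotropic i hi]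

theorem exists_forall_isAdaptedPair (halt : B.IsAlt) (hB : B.SeparatingLeft)
    (hg : ∀ u v, B (g u) (g v) = B u v) (h2 : (2 : k) ≠ 0) (hζ : IsPrimitiveRoot ζ m)
    (hgm : g ^ m = 1 ∨ g ^ m = -1) :
    ∃ (p : ℕ) (ε τ : k), 0 < p ∧ p ≤ m ∧ ε ^ 2 + τ ^ 2 = 1 ∧ ∀ y ∈ gradedSkew B g ζ,
      y ^ (Nat.lcm 2 m + 1) = y → y ≠ 0 → ∃ e f, IsAdaptedPair B g p ε τ y e f := by
  obtain hgm | hgm := hgm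
  · have hiso (i : ℕ) (hi : ζ ^ i = -1) : g ^ (2 * i) = 1 := by
      obtain ⟨l, hl⟩ := hζ.dvd_of_pow_eq_one (2 * i) (by rw [mul_comm, pow_mul, hi, neg_one_sq])
      rw [hl, pow_mul, hgm, one_pow]
    exact ⟨m, 1, 0, NeZero.pos m, le_rfl, by simp, fun y hy hpow hy₀ =>
      exists_isAdaptedPair_of_isotropic halt hB hg h2 hζ (by simp [hgm]) hiso hy hpow hy₀⟩
  · obtain ⟨s, hms | hms⟩ := m.even_or_odd'
    · exact ⟨s, 0, 1, by have := NeZero.pos m; omega, by omega, by simp, fun y hy hpow hy₀ =>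
        exists_isAdaptedPair_of_pow_eq_neg_one halt hB hg h2 hζ hms (hms ▸ hgm) hy hpow hy₀⟩
    · have hiso (i : ℕ) (hi : ζ ^ i = -1) : g ^ (2 * i) = 1 := by
        refine absurd ?_ h2
        have hone : ((-1 : k)) ^ m = 1 := by rw [← hi, pow_right_comm, hζ.pow_eq_one, one_pow]
        rw [Odd.neg_one_pow ⟨s, hms⟩] at hone
        linear_combination -hone
      exact ⟨m, -1, 0, NeZero.pos m, le_rfl, by simp, fun y hy hpow hy₀ =>
        exists_isAdaptedPair_of_isotropic halt hB hg h2 hζ (by simp [hgm]) hiso hy hpow hy₀⟩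

end AdaptedPair

section Transport

open Module

variable {k V ι : Type*} [Field k] [AddCommGroup V] [Module k V] {B : V →ₗ[k] V →ₗ[k] k}
  {g : End k V} {p : ℕ} {ε τ : k}

/-- The endomorphism of rank two sending a hyperbolic pair `(e, f)` to `(e', f')` and vanishing on
the orthogonal complement of the pair. -/
def pairMap (B : V →ₗ[k] V →ₗ[k] k) (e f e' f' : V) : End k V :=
  (B.flip f).smulRight e' - (B.flip e).smulRight f'

theorem pairMap_apply (e f e' f' v : V) :
    pairMap B e f e' f' v = B v f • e' - B v e • f' :=
  rfl

theorem isAdjointPair_pairMap (halt : B.IsAlt) (e f e' f' : V) :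
    LinearMap.IsAdjointPair B B (pairMap B e f e' f') (pairMap B e' f' e f) := fun u v => by
  simp only [pairMap_apply, map_sub, map_smul, LinearMap.sub_apply, LinearMap.smul_apply,
    smul_eq_mul, ← halt.neg v]
  ring

theorem mul_pairMap_of_isometry (hg : ∀ u v, B (g u) (g v) = B u v) (e f e' f' : V) :
    g * pairMap B e f e' f' = pairMap B (g e) (g f) (g e') (g f') * g :=
  LinearMap.ext fun v => by simp only [End.mul_apply, pairMap_apply, map_sub, map_smul, hg]

theorem pairMap_rotate (hετ : ε ^ 2 + τ ^ 2 = 1) (e f e' f' : V) :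
    pairMap B (ε • e + τ • f) (ε • f - τ • e) (ε • e' + τ • f') (ε • f' - τ • e') =
      pairMap B e f e' f' := by
  ext v
  simp only [pairMap_apply, map_add, map_sub, map_smul, smul_eq_mul]
  linear_combination (norm := module) hετ • (B v f • e' - B v e • f')

theorem mul_pairMap_of_apply_eq_smul {x x' : End k V} (hx : ∀ u v, B (x u) v = -B u (x v)) {t : k}
    {e f e' f' : V} (he : x e = t • e) (hf : x f = -t • f) (he' : x' e' = t • e')
    (hf' : x' f' = -t • f') : x' * pairMap B e f e' f' = pairMap B e f e' f' * x := by
  ext v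
  simp only [End.mul_apply, pairMap_apply, hx, map_sub, map_smul, he, hf, he', hf',
    smul_eq_mul]
  module

/-- A frame for `g`: families `e` and `f` such that `g ^ p` acts on each plane spanned by `e j` and
`f j` as one fixed rotation and such that the `g ^ i (e j)` and `g ^ i (f j)`, `i < p`, form a
symplectic basis of their span. -/
structure IsFrame (B : V →ₗ[k] V →ₗ[k] k) (g : End k V) (p : ℕ) (ε τ : k) (e f : ι → V) : Prop where
  pow_left (j : ι) : (g ^ p) (e j) = ε • e j + τ • f j
  pow_right (j : ι) : (g ^ p) (f j) = ε • f j - τ • e j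
  form_left_left : ∀ j l, ∀ i < p, B (e j) ((g ^ i) (e l)) = 0
  form_right_right : ∀ j l, ∀ i < p, B (f j) ((g ^ i) (f l)) = 0
  form_left_right_self (j : ι) : B (e j) (f j) = 1
  form_left_right : ∀ j l, ∀ i < p, i ≠ 0 ∨ j ≠ l → B (e j) ((g ^ i) (f l)) = 0
  form_right_left : ∀ j l, ∀ i < p, i ≠ 0 ∨ j ≠ l → B (f j) ((g ^ i) (e l)) = 0

theorem IsFrame.swap {e f : ι → V} (h : IsFrame B g p ε τ e f) (halt : B.IsAlt) :
    IsFrame B g p ε τ f (-e) where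
  pow_left j := by rw [h.pow_right, Pi.neg_apply, smul_neg, sub_eq_add_neg]
  pow_right j := by rw [Pi.neg_apply, map_neg, h.pow_left, neg_add', smul_neg]
  form_left_left := h.form_right_right
  form_right_right j l i hi := by simp [h.form_left_left j l i hi]
  form_left_right_self j := by simp [halt.neg, h.form_left_right_self]
  form_left_right j l i hi hne := by simp [h.form_right_left j l i hi hne]
  form_right_left j l i hi hne := by simp [h.form_left_right j l i hi hne]

variable [Fintype ι] {e f e' f' : ι → V}

/-- The endomorphism sending the symplectic basis attached to the frame `(e, f)` to the one attached
to `(e', f')` and vanishing on the orthogonal complement of the former. -/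
def transport (B : V →ₗ[k] V →ₗ[k] k) (g : End k V) (p : ℕ) (e f e' f' : ι → V) : End k V :=
  ∑ j, ∑ i ∈ Finset.range p,
    pairMap B ((g ^ i) (e j)) ((g ^ i) (f j)) ((g ^ i) (e' j)) ((g ^ i) (f' j))

theorem transport_swap :
    transport B g p f (-e) f' (-e') = transport B g p e f e' f' := by
  refine Finset.sum_congr rfl fun j _ => Finset.sum_congr rfl fun i _ => ?_
  ext v
  simp only [pairMap_apply, Pi.neg_apply, map_neg]
  module

theorem isAdjointPair_transport (halt : B.IsAlt) :
    LinearMap.IsAdjointPair B B (transport B g p e f e' f') (transport B g p e' f' e f) :=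
  fun u v => by
    simp only [transport, LinearMap.sum_apply, map_sum]
    exact Finset.sum_congr rfl fun j _ => Finset.sum_congr rfl fun i _ =>
      isAdjointPair_pairMap halt _ _ _ _ u v

theorem IsFrame.commute_transport (h : IsFrame B g p ε τ e f) (h' : IsFrame B g p ε τ e' f')
    (hg : ∀ u v, B (g u) (g v) = B u v) (hετ : ε ^ 2 + τ ^ 2 = 1) :
    Commute g (transport B g p e f e' f') := by
  simp only [Commute, SemiconjBy, transport, Finset.mul_sum, Finset.sum_mul]
  refine Finset.sum_congr rfl fun j _ => ?_
  let F (i : ℕ) := pairMap B ((g ^ i) (e j)) ((g ^ i) (f j)) ((g ^ i) (e' j)) ((g ^ i) (f' j))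
  have hF (i : ℕ) : g * F i = F (i + 1) * g := by
    simp only [F, mul_pairMap_of_isometry hg, pow_succ', End.mul_apply]
  have hFp : F p = F 0 := by
    simp only [F, h.pow_left, h.pow_right, h'.pow_left, h'.pow_right, pairMap_rotate hετ, pow_zero,
      End.one_apply]
  calc ∑ i ∈ Finset.range p, g * F i
      = (∑ i ∈ Finset.range p, F (i + 1)) * g := by simp only [hF, Finset.sum_mul]
    _ = (∑ i ∈ Finset.range p, F i) * g := by
      refine congrArg (· * g) (add_right_cancel (b := F 0) ?_)
      rw [← Finset.sum_range_succ', Finset.sum_range_succ, hFp]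
    _ = ∑ i ∈ Finset.range p, F i * g := Finset.sum_mul _ _ _

theorem mul_transport {y : End k V} (hy : Commute y g) :
    y * transport B g p e f e' f' = transport B g p e f (y ∘ e') (y ∘ f') := by
  have hpow (i : ℕ) (v : V) : y ((g ^ i) v) = (g ^ i) (y v) :=
    LinearMap.congr_fun (hy.pow_right i).eq v
  ext v
  simp only [transport, End.mul_apply, LinearMap.sum_apply, map_sum, pairMap_apply, map_sub,
    map_smul, hpow, Function.comp_apply]

theorem IsFrame.transport_apply_left (h : IsFrame B g p ε τ e f) (hp : 0 < p) (l : ι) :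
    transport B g p e f e' f' (e l) = e' l := by
  simp only [transport, LinearMap.sum_apply, pairMap_apply]
  rw [Finset.sum_eq_single l, Finset.sum_eq_single 0]
  · rw [h.form_left_left l l 0 hp]
    simp [h.form_left_right_self]
  · intro i hi hi₀
    rw [Finset.mem_range] at hi
    rw [h.form_left_right l l i hi (.inl hi₀), h.form_left_left l l i hi]
    simp
  · simp [hp.ne']
  · intro j _ hj
    refine Finset.sum_eq_zero fun i hi => ?_
    rw [Finset.mem_range] at hi
    rw [h.form_left_right l j i hi (.inr hj.symm), h.form_left_left l j i hi]
    simp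
  · simp

theorem IsFrame.transport_apply_right (h : IsFrame B g p ε τ e f) (halt : B.IsAlt) (hp : 0 < p)
    (l : ι) : transport B g p e f e' f' (f l) = f' l := by
  rw [← transport_swap, (h.swap halt).transport_apply_left hp]

theorem IsFrame.transport_mul_transport {e'' f'' : ι → V}
    (h' : IsFrame B g p ε τ e' f') (h'' : IsFrame B g p ε τ e'' f'') (halt : B.IsAlt)
    (hg : ∀ u v, B (g u) (g v) = B u v) (hετ : ε ^ 2 + τ ^ 2 = 1) (hp : 0 < p) :
    transport B g p e' f' e'' f'' * transport B g p e f e' f' = transport B g p e f e'' f'' := by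
  rw [mul_transport (h'.commute_transport h'' hg hετ).symm]
  congr 1 <;> funext j
  · exact h'.transport_apply_left hp j
  · exact h'.transport_apply_right halt hp j

theorem transport_mul_eq_mul_transport {ζ : k} (hζ₀ : ζ ≠ 0) {x x' : End k V}
    (hx : x ∈ gradedSkew B g ζ) (hx' : x' ∈ gradedSkew B g ζ) {t : ι → k}
    (he : ∀ j, x (e j) = t j • e j) (hf : ∀ j, x (f j) = -t j • f j)
    (he' : ∀ j, x' (e' j) = t j • e' j) (hf' : ∀ j, x' (f' j) = -t j • f' j) :
    x' * transport B g p e f e' f' = transport B g p e f e' f' * x := by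
  have hpow {y : End k V} (hy : y ∈ gradedSkew B g ζ) {a : k} {v : V} (hv : y v = a • v) (i : ℕ) :
      y ((g ^ i) v) = ((ζ ^ i)⁻¹ * a) • (g ^ i) v := by
    rw [mul_smul, ← map_smul, ← hv, pow_apply_of_mem_gradedSkew hy,
      inv_smul_smul₀ (pow_ne_zero i hζ₀)]
  simp only [transport, Finset.mul_sum, Finset.sum_mul]
  refine Finset.sum_congr rfl fun j _ => Finset.sum_congr rfl fun i _ => ?_
  refine mul_pairMap_of_apply_eq_smul (apply_left_of_mem_gradedSkew hx) (hpow hx (he j) i) ?_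
    (hpow hx' (he' j) i) ?_
  · rw [hpow hx (hf j), mul_neg]
  · rw [hpow hx' (hf' j), mul_neg]

end Transport

section Transitivity

open Module

variable {k V ι : Type*} [Field k] [AddCommGroup V] [Module k V] {B : V →ₗ[k] V →ₗ[k] k}
  {g : End k V} {ζ : k} {M m p : ℕ} {ε τ : k} {c : Submodule k (End k V)} {b b' : ι → End k V}
  {e f e' f' : ι → V}

theorem IsPotentBasis.mem (hb : IsPotentBasis M c b) (j : ι) : b j ∈ c :=
  hb.span_eq ▸ Submodule.subset_span ⟨j, rfl⟩

theorem IsPotentBasis.le_iff (hb : IsPotentBasis M c b) {W : Submodule k (End k V)} :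
    c ≤ W ↔ ∀ j, b j ∈ W := by
  rw [← hb.span_eq, Submodule.span_le, Set.range_subset_iff]
  rfl

variable [DecidableEq ι]

/-- A frame for `g` consisting of eigenvectors dual to the family `b`: the endomorphism `b i`
has eigenvalues `1` and `-1` on `e i` and `f i`, and kills the other vectors of the frame. -/
structure IsAdaptedFrame (B : V →ₗ[k] V →ₗ[k] k) (g : End k V) (p : ℕ) (ε τ : k)
    (b : ι → End k V) (e f : ι → V) : Prop extends IsFrame B g p ε τ e f where
  apply_left (i j : ι) : b i (e j) = (if i = j then 1 else 0 : k) • e j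
  apply_right (i j : ι) : b i (f j) = -(if i = j then 1 else 0 : k) • f j

theorem IsPotentBasis.apply_eq_smul (hb : IsPotentBasis M c b) {σ : k} (hσ : σ ≠ 0)
    {u : ι → V} (hu : ∀ j, b j (u j) = σ • u j) (i j : ι) :
    b i (u j) = (if i = j then σ else 0) • u j := by
  split_ifs with hij
  · rw [hij, hu]
  · refine smul_right_injective V hσ ?_
    beta_reduce
    rw [← map_smul, ← hu, ← End.mul_apply, hb.mul_eq_zero hij, zero_smul, smul_zero,
      LinearMap.zero_apply]

theorem IsPotentBasis.isAdaptedFrame (hb : IsPotentBasis M c b) (hc : c ≤ gradedSkew B g ζ)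
    (hζ : IsPrimitiveRoot ζ m) (hpm : p ≤ m)
    (hef : ∀ j, IsAdaptedPair B g p ε τ (b j) (e j) (f j)) :
    IsAdaptedFrame B g p ε τ b e f := by
  have hleft (i j : ι) : b i (e j) = (if i = j then 1 else 0 : k) • e j :=
    hb.apply_eq_smul one_ne_zero (fun j => by rw [(hef j).apply_left, one_smul]) i j
  have hright (i j : ι) : b i (f j) = -(if i = j then 1 else 0 : k) • f j := by
    rw [hb.apply_eq_smul (neg_ne_zero.2 one_ne_zero)
      (fun j => by rw [(hef j).apply_right, neg_one_smul]) i j, neg_ite, neg_zero]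
  have hζ₀ {i : ℕ} (hi : i < p) : ζ ^ i ≠ 0 := pow_ne_zero i (hζ.ne_zero (by omega))
  have hcross {j l : ι} {i : ℕ} (hi : i < p) (hne : i ≠ 0 ∨ j ≠ l) :
      ζ ^ i ≠ if j = l then 1 else 0 := by
    split_ifs with hjl
    · exact hζ.pow_ne_one_of_pos_of_lt (hne.resolve_right (not_not.2 hjl)) (hi.trans_le hpm)
    · exact hζ₀ hi
  have hgr (j : ι) := hc (hb.mem j)
  refine ⟨⟨fun j => (hef j).pow_left, fun j => (hef j).pow_right, fun j l i hi => ?_,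
    fun j l i hi => ?_, fun j => (hef j).form_eq_one, fun j l i hi hne => ?_,
    fun j l i hi hne => ?_⟩, hleft, hright⟩
  · obtain rfl | hjl := eq_or_ne j l
    · exact (hef j).isotropic_left i hi
    · refine apply_pow_eq_zero_of_mem_gradedSkew (hgr j) (hleft j j) (hleft j l) ?_
      simp [hjl, hζ₀ hi]
  · obtain rfl | hjl := eq_or_ne j l
    · exact (hef j).isotropic_right i hi
    · refine apply_pow_eq_zero_of_mem_gradedSkew (hgr j) (hright j j) (hright j l) ?_
      simp [hjl, hζ₀ hi]
  · refine apply_pow_eq_zero_of_mem_gradedSkew (hgr j) (hleft j j) (hright j l) ?_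
    simpa using hcross hi hne
  · refine apply_pow_eq_zero_of_mem_gradedSkew (hgr j) (hright j j) (hleft j l) ?_
    simpa using hcross hi hne

theorem exists_forall_isAdaptedFrame [IsAlgClosed k] [FiniteDimensional k V] [NeZero m]
    (halt : B.IsAlt) (hB : B.SeparatingLeft) (hg : ∀ u v, B (g u) (g v) = B u v) (h2 : (2 : k) ≠ 0)
    (hζ : IsPrimitiveRoot ζ m) (hgm : g ^ m = 1 ∨ g ^ m = -1)
    (hc : c ≤ gradedSkew B g ζ) :
    ∃ (p : ℕ) (ε τ : k), 0 < p ∧ ε ^ 2 + τ ^ 2 = 1 ∧ ∀ b : ι → End k V,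
      IsPotentBasis (Nat.lcm 2 m) c b → ∃ e f, IsAdaptedFrame B g p ε τ b e f := by
  obtain ⟨p, ε, τ, hp, hpm, hετ, h⟩ := exists_forall_isAdaptedPair halt hB hg h2 hζ hgm
  refine ⟨p, ε, τ, hp, hετ, fun b hb => ?_⟩
  choose e f hef using fun j =>
    h (b j) (hc (hb.mem j)) (hb.pow_succ_eq j) (hb.linearIndependent.ne_zero j)
  exact ⟨e, f, hb.isAdaptedFrame hc hζ hpm hef⟩

theorem IsAdaptedFrame.eq_zero_of_apply_left [Finite ι] (h : IsAdaptedFrame B g p ε τ b e f)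
    (hb : IsPotentBasis M c b) {x : End k V} (hx : x ∈ c) (hxe : ∀ j, x (e j) = 0) : x = 0 := by
  cases nonempty_fintype ι
  rw [← hb.span_eq] at hx
  obtain ⟨s, rfl⟩ := (Submodule.mem_span_range_iff_exists_fun k).1 hx
  refine Finset.sum_eq_zero fun j _ => ?_
  have he₀ : e j ≠ 0 := fun he => by simpa [he] using h.form_left_right_self j
  have hs : s j • e j = 0 := by simpa [h.apply_left] using hxe j
  rw [(smul_eq_zero.1 hs).resolve_right he₀, zero_smul]

theorem IsAdaptedFrame.mul_transport_eq_transport_mul [Fintype ι]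
    (h : IsAdaptedFrame B g p ε τ b e f) (h' : IsAdaptedFrame B g p ε τ b' e' f')
    (hζ₀ : ζ ≠ 0) {i : ι} (hi : b i ∈ gradedSkew B g ζ)
    (hi' : b' i ∈ gradedSkew B g ζ) :
    b' i * transport B g p e f e' f' = transport B g p e f e' f' * b i :=
  transport_mul_eq_mul_transport hζ₀ hi hi' (h.apply_left i) (h.apply_right i) (h'.apply_left i)
    (h'.apply_right i)

/-- By maximality, the frame attached to a potent basis of a Cartan subspace exhausts the part of
the space on which the Cartan subspace acts nontrivially. -/
theorem IsAdaptedFrame.transport_self_mul [Fintype ι] (h : IsAdaptedFrame B g p ε τ b e f)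
    (hb : IsPotentBasis M c b) (hc : IsCartanSubmodule (gradedSkew B g ζ) c) (halt : B.IsAlt)
    (hg : ∀ u v, B (g u) (g v) = B u v) (hM : (M : k) ≠ 0) (hζ₀ : ζ ≠ 0)
    (hετ : ε ^ 2 + τ ^ 2 = 1) (hp : 0 < p) {x : End k V} (hx : x ∈ c) :
    transport B g p e f e f * x = x := by
  set P := transport B g p e f e f
  have hcomm (x) (hx : x ∈ c) : Commute x P :=
    hb.le_iff (W := (LinearMap.mulRight k P).eqLocus (LinearMap.mulLeft k P)) |>.2
      (fun j => h.mul_transport_eq_transport_mul h hζ₀ (hc.le (hb.mem j)) (hc.le (hb.mem j))) hx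
  have hidem : IsIdempotentElem P :=
    h.transport_mul_transport h.toIsFrame halt hg hετ hp
  refine hb.le_iff (W := (LinearMap.mulLeft k P).eqLocus LinearMap.id) |>.2 (fun j => ?_) hx
  have hj := hb.mem j
  have hpow : (P * b j) ^ (M + 1) = P * b j := by
    rw [(hcomm _ hj).symm.mul_pow, hidem.pow_succ_eq, hb.pow_succ_eq]
  have hPj : P * b j ∈ c :=
    hc.mem_of_commute _ (mul_mem_gradedSkew (hc.le hj) (isAdjointPair_transport halt)
      (h.commute_transport h.toIsFrame hg hετ) (hcomm _ hj))
      (isSemisimple_of_pow_succ_eq hM hpow)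
      fun x hx => (hcomm x hx).mul_right (hc.commute x hx _ hj)
  refine sub_eq_zero.1 (h.eq_zero_of_apply_left hb (sub_mem hPj hj) fun i => ?_)
  change P (b j (e i)) - b j (e i) = 0
  rw [h.apply_left, map_smul, h.transport_apply_left hp, sub_self]

theorem IsAdaptedFrame.mul_transport_self [Fintype ι] (h : IsAdaptedFrame B g p ε τ b e f)
    {Q : End k V} (hQg : Commute Q g) (hQb : ∀ j, Q * b j = b j) :
    Q * transport B g p e f e f = transport B g p e f e f := by
  have hQ {u : ι → V} {σ : k} (hσ : σ ≠ 0) (hu : ∀ j, b j (u j) = σ • u j) : Q ∘ u = u := by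
    funext j
    refine smul_right_injective V hσ ?_
    beta_reduce
    rw [Function.comp_apply, ← map_smul, ← hu, ← End.mul_apply, hQb]
  rw [mul_transport hQg, hQ one_ne_zero fun j => by simp [h.apply_left],
    hQ (neg_ne_zero.2 one_ne_zero) fun j => by simp [h.apply_right]]

theorem IsAdaptedFrame.transport_self_eq [Fintype ι] (h : IsAdaptedFrame B g p ε τ b e f)
    (h' : IsAdaptedFrame B g p ε τ b' e' f') (hb : IsPotentBasis M c b)
    (hb' : IsPotentBasis M c b') (hc : IsCartanSubmodule (gradedSkew B g ζ) c)
    (halt : B.IsAlt) (hB : B.SeparatingLeft) (hg : ∀ u v, B (g u) (g v) = B u v) (hM : (M : k) ≠ 0)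
    (hζ₀ : ζ ≠ 0) (hετ : ε ^ 2 + τ ^ 2 = 1) (hp : 0 < p) :
    transport B g p e f e f = transport B g p e' f' e' f' := by
  set P := transport B g p e f e f
  set P' := transport B g p e' f' e' f'
  have hP : Commute P g := (h.commute_transport h.toIsFrame hg hετ).symm
  have hP' : Commute P' g := (h'.commute_transport h'.toIsFrame hg hετ).symm
  have hPP' : P * P' = P' := h'.mul_transport_self hP fun j =>
    h.transport_self_mul hb hc halt hg hM hζ₀ hετ hp (hb'.mem j)
  have hP'P : P' * P = P := h.mul_transport_self hP' fun j =>
    h'.transport_self_mul hb' hc halt hg hM hζ₀ hετ hp (hb.mem j)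
  have hadj : LinearMap.IsAdjointPair B B (P' * P) (P * P') :=
    (isAdjointPair_transport halt).mul (isAdjointPair_transport halt)
  rw [hP'P, hPP'] at hadj
  ext u
  refine sub_eq_zero.1 (hB _ fun v => ?_)
  rw [map_sub, LinearMap.sub_apply, hadj, isAdjointPair_transport halt u, sub_self]

theorem IsAdaptedFrame.exists_isometry_mul_eq_mul [Finite ι] (h : IsAdaptedFrame B g p ε τ b e f)
    (h' : IsAdaptedFrame B g p ε τ b' e' f') (hb : IsPotentBasis M c b)
    (hb' : IsPotentBasis M c b') (hc : IsCartanSubmodule (gradedSkew B g ζ) c)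
    (halt : B.IsAlt) (hB : B.SeparatingLeft) (hg : ∀ u v, B (g u) (g v) = B u v) (hM : (M : k) ≠ 0)
    (hζ₀ : ζ ≠ 0) (hετ : ε ^ 2 + τ ^ 2 = 1) (hp : 0 < p) :
    ∃ h : End k V, (∀ u v, B (h u) (h v) = B u v) ∧ Commute h g ∧ ∀ j, h * b j = b' j * h := by
  cases nonempty_fintype ι
  set P := transport B g p e f e f
  set T := transport B g p e f e' f'
  set S := transport B g p e' f' e f
  have hP : P = transport B g p e' f' e' f' :=
    h.transport_self_eq h' hb hb' hc halt hB hg hM hζ₀ hετ hp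
  have hmul {e₁ f₁ e₂ f₂ e₃ f₃ : ι → V} (h₂ : IsFrame B g p ε τ e₂ f₂)
      (h₃ : IsFrame B g p ε τ e₃ f₃) : transport B g p e₂ f₂ e₃ f₃ * transport B g p e₁ f₁ e₂ f₂ =
        transport B g p e₁ f₁ e₃ f₃ := h₂.transport_mul_transport h₃ halt hg hετ hp
  have hPP : P * P = P := hmul h.toIsFrame h.toIsFrame
  have hST : S * T = P := hmul h'.toIsFrame h.toIsFrame
  have hPT : P * T = T := hP ▸ hmul h'.toIsFrame h'.toIsFrame
  have hSP : S * P = S := hP ▸ hmul h'.toIsFrame h.toIsFrame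
  have hinv : (1 - P + S) * (1 - P + T) = 1 := by
    linear_combination (norm := noncomm_ring) hPP + hST - hPT - hSP
  have hadj : LinearMap.IsAdjointPair B B (1 - P + T : End k V) (1 - P + S : End k V) :=
    (LinearMap.isAdjointPair_one.sub (isAdjointPair_transport halt)).add
      (isAdjointPair_transport halt)
  refine ⟨1 - P + T, fun u v => ?_, ?_, fun j => ?_⟩
  · rw [hadj, ← End.mul_apply, hinv, End.one_apply]
  · have hgP : Commute g P := h.commute_transport h.toIsFrame hg hετ
    have hgT : Commute g T := h.commute_transport h'.toIsFrame hg hετ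
    exact (((Commute.one_right g).sub_right hgP).add_right hgT).symm
  · have hj : P * b j = b j := h.transport_self_mul hb hc halt hg hM hζ₀ hετ hp (hb.mem j)
    have hj' : b' j * P = b' j := by
      rw [hP, h'.mul_transport_eq_transport_mul h' hζ₀ (hc.le (hb'.mem j)) (hc.le (hb'.mem j)),
        h'.transport_self_mul hb' hc halt hg hM hζ₀ hετ hp (hb'.mem j)]
    have hT : b' j * T = T * b j :=
      h.mul_transport_eq_transport_mul h' hζ₀ (hc.le (hb.mem j)) (hc.le (hb'.mem j))
    linear_combination (norm := noncomm_ring) hj' - hj - hT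

omit [DecidableEq ι] in
theorem IsPotentBasis.exists_isometry_mul_eq_mul [Finite ι] [IsAlgClosed k]
    [FiniteDimensional k V] [NeZero m]
    (hb : IsPotentBasis (Nat.lcm 2 m) c b) (hb' : IsPotentBasis (Nat.lcm 2 m) c b')
    (hc : IsCartanSubmodule (gradedSkew B g ζ) c) (halt : B.IsAlt) (hB : B.SeparatingLeft)
    (hg : ∀ u v, B (g u) (g v) = B u v) (h2 : (2 : k) ≠ 0) (hζ : IsPrimitiveRoot ζ m)
    (hgm : g ^ m = 1 ∨ g ^ m = -1) :
    ∃ h : End k V, (∀ u v, B (h u) (h v) = B u v) ∧ Commute h g ∧ ∀ j, h * b j = b' j * h := by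
  classical
  obtain ⟨p, ε, τ, hp, hετ, hframe⟩ :=
    exists_forall_isAdaptedFrame (ι := ι) halt hB hg h2 hζ hgm hc.le
  obtain ⟨e, f, hef⟩ := hframe b hb
  obtain ⟨e', f', hef'⟩ := hframe b' hb'
  exact hef.exists_isometry_mul_eq_mul hef' hb hb' hc halt hB hg (natCast_lcm_two_ne_zero h2 hζ)
    (hζ.ne_zero (NeZero.ne m)) hετ hp

end Transitivity

section MatrixForm

open Module

variable {k N : Type*} [Field k] [Fintype N] [DecidableEq N] {Ω g : Matrix N N k}

theorem transpose_mul_mul_eq_iff_toLinearMap₂' {h : Matrix N N k} : hᵀ * Ω * h = Ω ↔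
    ∀ u v, toLinearMap₂' k Ω (toLin' h u) (toLin' h v) = toLinearMap₂' k Ω u v := by
  rw [← (toLinearMap₂' k (S₁ := k) (S₂ := k)).injective.eq_iff, ← toLinearMap₂'_comp,
    LinearMap.ext_iff₂]
  rfl

theorem isAlt_toLinearMap₂' (hΩ : Ωᵀ = -Ω) (h2 : (2 : k) ≠ 0) :
    (toLinearMap₂' k Ω : (N → k) →ₗ[k] (N → k) →ₗ[k] k).IsAlt := by
  intro u
  have hskew : u ⬝ᵥ Ω *ᵥ u = -(u ⬝ᵥ Ω *ᵥ u) := by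
    rw [← dotProduct_neg, ← neg_mulVec, ← hΩ, dotProduct_transpose_mulVec]
  rw [toLinearMap₂'_apply']
  exact (mul_eq_zero.1 (by linear_combination hskew)).resolve_left h2

theorem isUnit_of_transpose_mul_mul_eq (hΩ : IsUnit Ω.det) (hg : gᵀ * Ω * g = Ω) :
    IsUnit g := by
  rw [← hg, det_mul] at hΩ
  exact (isUnit_iff_isUnit_det g).2 (isUnit_of_mul_isUnit_right hΩ)

theorem toLin'_mem_gradedSkew_iff (hg : IsUnit g) {ζ : k} {x : Matrix N N k} :
    toLin' x ∈ gradedSkew (toLinearMap₂' k Ω) (toLin' g) ζ ↔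
      xᵀ * Ω + Ω * x = 0 ∧ g * x * g⁻¹ = ζ • x := by
  refine and_congr ?_ ?_
  · rw [SetLike.mem_coe, LinearMap.mem_skewAdjointSubmodule, LinearMap.IsSkewAdjoint,
      add_eq_zero_iff_eq_neg, ← Matrix.mul_neg]
    have hneg := isAdjointPair_toLinearMap₂' Ω Ω x (-x)
    rwa [map_neg] at hneg
  · have := hg.invertible
    rw [mul_inv_eq_iff_eq_mul_of_invertible, smul_mul_assoc, ← toLin'.injective.eq_iff, toLin'_mul,
      map_smul, toLin'_mul]
    rfl

/-- Conjugation `x ↦ h x h⁻¹` by an invertible matrix `h`. -/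
noncomputable def conjAlgEquiv (h : (Matrix N N k)ˣ) : Matrix N N k ≃ₐ[k] Matrix N N k :=
  MulSemiringAction.toAlgEquiv k _ (ConjAct.toConjAct h)

theorem conjAlgEquiv_apply (h : (Matrix N N k)ˣ) (x : Matrix N N k) :
    conjAlgEquiv h x = h * x * (h : Matrix N N k)⁻¹ := by
  rw [← coe_units_inv]
  rfl

theorem conjAlgEquiv_symm_apply (h : (Matrix N N k)ˣ) (x : Matrix N N k) :
    (conjAlgEquiv h).symm x = (h : Matrix N N k)⁻¹ * x * h := by
  rw [AlgEquiv.symm_apply_eq, conjAlgEquiv_apply, ← coe_units_inv]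
  simp [mul_assoc]

theorem mem_littleWeylSet_iff {r : ℕ} {H : Set (Matrix N N k)} (hH : ∀ h ∈ H, IsUnit h)
    {c : Submodule k (Matrix N N k)} {b : Fin r → Matrix N N k}
    {w : Matrix (Fin r) (Fin r) k} :
    w ∈ littleWeylSet H c b ↔ ∃ h : (Matrix N N k)ˣ, (h : Matrix N N k) ∈ H ∧
      c.map (conjAlgEquiv h).toLinearMap = c ∧
      conjAlgEquiv h ∘ b = fun j => ∑ i, w i j • b i := by
  have hnormalizes (h : (Matrix N N k)ˣ) :
      c.map (conjAlgEquiv h).toLinearMap = c ↔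
        (∀ x ∈ c, conjAlgEquiv h x ∈ c) ∧ ∀ x ∈ c, (conjAlgEquiv h).symm x ∈ c := by
    rw [le_antisymm_iff, Submodule.map_le_iff_le_comap]
    refine and_congr Iff.rfl (forall₂_congr fun x _ => ?_)
    exact Submodule.mem_map_equiv (e := (conjAlgEquiv h).toLinearEquiv) (p := c)
  simp only [hnormalizes, conjAlgEquiv_apply, conjAlgEquiv_symm_apply, funext_iff, and_assoc,
    Function.comp_apply]
  exact ⟨fun ⟨h, hh, hw⟩ => ⟨(hH h hh).unit, hh, hw⟩, fun ⟨h, hh, hw⟩ => ⟨h, hh, hw⟩⟩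

theorem IsCartanSubspace.isCartanSubmodule_map [IsAlgClosed k] (hg : IsUnit g) {ζ : k}
    {c : Submodule k (Matrix N N k)}
    (hc : IsCartanSubspace {x | xᵀ * Ω + Ω * x = 0 ∧ g * x * g⁻¹ = ζ • x} c) :
    IsCartanSubmodule (gradedSkew (toLinearMap₂' k Ω) (toLin' g) ζ)
      (c.map toLinAlgEquiv'.toLinearMap) := by
  obtain ⟨hsub, hcomm, hss, hmax⟩ := hc
  have hmem (x) := toLin'_mem_gradedSkew_iff (Ω := Ω) hg (ζ := ζ) (x := x)
  refine isCartanSubmodule_of_maximal ?_ ?_ ?_ ?_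
  · rintro _ ⟨x, hx, rfl⟩
    exact (hmem x).2 (hsub hx)
  · rintro _ ⟨x, hx, rfl⟩ _ ⟨y, hy, rfl⟩
    exact (show Commute x y from hcomm x hx y hy).map toLinAlgEquiv'
  · rintro _ ⟨x, hx, rfl⟩
    exact (hss x hx).isSemisimple_toLin'
  · intro c' hle' hcomm' hss' hcc'
    have hpull := hmax (c'.comap toLinAlgEquiv'.toLinearMap)
      ⟨fun x hx => (hmem x).1 (hle' hx),
        fun x hx y hy => toLinAlgEquiv'.injective ?_, fun x hx => ?_⟩
      (Submodule.map_le_iff_le_comap.1 hcc')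
    · rw [← hpull]
      exact (Submodule.map_comap_eq_of_surjective toLinAlgEquiv'.surjective c').symm
    · rw [map_mul, map_mul]
      exact hcomm' _ hx _ hy
    · rw [← LinearMap.toMatrix'_toLin' x]
      exact isSemisimpleMat_toMatrix' (hss' _ hx)

theorem IsPotentBasis.exists_conjAlgEquiv_comp_eq [IsAlgClosed k] {ι : Type*} [Finite ι] {m : ℕ}
    [NeZero m] {c : Submodule k (Matrix N N k)} {b b' : ι → Matrix N N k}
    (hb : IsPotentBasis (Nat.lcm 2 m) c b) (hb' : IsPotentBasis (Nat.lcm 2 m) c b')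
    (hΩ : Ωᵀ = -Ω) (hΩu : IsUnit Ω.det) (h2 : (2 : k) ≠ 0) {ζ : k} (hζ : IsPrimitiveRoot ζ m)
    (hg : gᵀ * Ω * g = Ω) (hgm : g ^ m = 1 ∨ g ^ m = -1)
    (hc : IsCartanSubspace {x | xᵀ * Ω + Ω * x = 0 ∧ g * x * g⁻¹ = ζ • x} c) :
    ∃ h : (Matrix N N k)ˣ, (h : Matrix N N k) ∈ {h | hᵀ * Ω * h = Ω ∧ h * g = g * h} ∧
      conjAlgEquiv h ∘ b = b' := by
  have hgm' : toLinAlgEquiv' g ^ m = 1 ∨ toLinAlgEquiv' g ^ m = -1 := by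
    rw [← map_pow]
    exact hgm.imp (fun h => by rw [h, map_one]) fun h => by rw [h, map_neg, map_one]
  obtain ⟨h, hisom, hcomm, hmul⟩ := (hb.map toLinAlgEquiv').exists_isometry_mul_eq_mul
    (hb'.map toLinAlgEquiv')
    (hc.isCartanSubmodule_map (isUnit_of_transpose_mul_mul_eq hΩu hg)) (isAlt_toLinearMap₂' hΩ h2)
    (LinearMap.separatingLeft_toLinearMap₂'_of_det_ne_zero' hΩu.ne_zero)
    (transpose_mul_mul_eq_iff_toLinearMap₂'.1 hg) h2 hζ hgm'
  obtain ⟨h, rfl⟩ := toLinAlgEquiv'.surjective h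
  have hΩh := transpose_mul_mul_eq_iff_toLinearMap₂'.2 hisom
  have hu := isUnit_of_transpose_mul_mul_eq hΩu hΩh
  refine ⟨hu.unit, ⟨hΩh, toLinAlgEquiv'.injective ?_⟩, funext fun j => ?_⟩
  · rw [map_mul, map_mul]
    exact hcomm
  · have hj : h * b j = b' j * h := toLinAlgEquiv'.injective <| by
      rw [map_mul, map_mul]
      exact hmul j
    have := hu.invertible
    rw [Function.comp_apply, conjAlgEquiv_apply, hu.unit_spec,
      mul_inv_eq_iff_eq_mul_of_invertible, hj]

theorem IsCartanSubspace.exists_isPotentBasis [IsAlgClosed k] (hg : IsUnit g) {ζ : k} {M : ℕ}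
    (hM : M ≠ 0) (hMeven : Even M) (hζ : ζ ^ M = 1) {c : Submodule k (Matrix N N k)}
    (hc : IsCartanSubspace {x | xᵀ * Ω + Ω * x = 0 ∧ g * x * g⁻¹ = ζ • x} c) {r : ℕ}
    (hr : finrank k c = r) : ∃ b : Fin r → Matrix N N k, IsPotentBasis M c b := by
  obtain ⟨b, hb⟩ := (hc.isCartanSubmodule_map hg).exists_isPotentBasis hM hMeven hζ
  have hrank : finrank k (c.map toLinAlgEquiv'.toLinearMap) = r :=
    (LinearEquiv.finrank_map_eq toLinAlgEquiv'.toLinearEquiv c).trans hr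
  have hback : (c.map toLinAlgEquiv'.toLinearMap).map toLinAlgEquiv'.symm.toLinearMap = c :=
    SetLike.coe_injective (by simp [Set.image_image])
  subst hrank
  exact ⟨_, hback ▸ hb.map toLinAlgEquiv'.symm⟩

end MatrixForm

section Omega

theorem omegaMat_transpose (k : Type*) [Field k] (n : ℕ) : (omegaMat k n)ᵀ = -omegaMat k n := by
  ext i j
  have hi := i.2
  simp only [transpose_apply, omegaMat, of_apply, Matrix.neg_apply]
  rw [add_comm (j : ℕ) i]
  split_ifs <;> first | omega | simp

theorem omegaMat_mul_omegaMat (k : Type*) [Field k] (n : ℕ) :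
    omegaMat k n * omegaMat k n = -1 := by
  ext i j
  have hi := i.2
  have hj := j.2
  rw [mul_apply, Finset.sum_eq_single i.rev]
  · simp only [omegaMat, of_apply, Matrix.neg_apply, Fin.val_rev, Matrix.one_apply, Fin.ext_iff]
    split_ifs <;> first | omega | simp
  · intro l _ hl
    have hl' := l.2
    rw [Ne, Fin.ext_iff, Fin.val_rev] at hl
    simp only [omegaMat, of_apply]
    rw [if_neg (by omega), zero_mul]
  · simp

theorem isUnit_det_omegaMat (k : Type*) [Field k] (n : ℕ) : IsUnit (omegaMat k n).det :=
  (isUnit_iff_isUnit_det _).1 <| IsUnit.of_mul_eq_one (-omegaMat k n) <| by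
    rw [mul_neg, omegaMat_mul_omegaMat, neg_neg]

end Omega

theorem stmt11_general {k N : Type*} [Field k] [IsAlgClosed k] [Fintype N] [DecidableEq N]
    (h2 : (2 : k) ≠ 0) {m : ℕ} (hm : 0 < m) {ζ : k} (hζ : IsPrimitiveRoot ζ m) {Ω g : Matrix N N k}
    (hΩ : Ωᵀ = -Ω) (hΩu : IsUnit Ω.det) (hg : gᵀ * Ω * g = Ω) (hgm : g ^ m = 1 ∨ g ^ m = -1)
    {c : Submodule k (Matrix N N k)}
    (hc : IsCartanSubspace {x | xᵀ * Ω + Ω * x = 0 ∧ g * x * g⁻¹ = ζ • x} c)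
    {r : ℕ} (hr : Module.finrank k c = r) :
    ∃ b : Fin r → Matrix N N k, LinearIndependent k b ∧ Submodule.span k (Set.range b) = c ∧
      littleWeylSet {h | hᵀ * Ω * h = Ω ∧ h * g = g * h} c b =
        GmqrSet k (Nat.lcm 2 m) 1 r := by
  have : NeZero m := ⟨hm.ne'⟩
  have hM : Nat.lcm 2 m ≠ 0 := Nat.lcm_ne_zero two_ne_zero hm.ne'
  have hMeven : Even (Nat.lcm 2 m) := even_iff_two_dvd.2 (Nat.dvd_lcm_left 2 m)
  obtain ⟨b, hb⟩ := hc.exists_isPotentBasis (isUnit_of_transpose_mul_mul_eq hΩu hg) hM hMeven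
    (hζ.pow_eq_one_iff_dvd _ |>.2 (Nat.dvd_lcm_right 2 m)) hr
  refine ⟨b, hb.linearIndependent, hb.span_eq, Set.ext fun w => ?_⟩
  rw [← hb.iff_mem_GmqrSet hM,
    mem_littleWeylSet_iff fun h hh => isUnit_of_transpose_mul_mul_eq hΩu hh.1]
  constructor
  · rintro ⟨h, -, hch, hbw⟩
    have hconj := hb.map (conjAlgEquiv h)
    rwa [hch, hbw] at hconj
  · intro hbw
    obtain ⟨h, hh, hhb⟩ := hb.exists_conjAlgEquiv_comp_eq hbw hΩ hΩu h2 hζ hg hgm hc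
    refine ⟨h, hh, ?_, hhb⟩
    rw [← (hb.map (conjAlgEquiv h)).span_eq, hhb, hbw.span_eq]

/-- little Weyl group of an inner automorphism of `Sp(2n,k)` of
order exactly `m`: with respect to a suitable basis of a Cartan subspace `c`
(of dimension `r`) it equals `G(2m,1,r)` if `m` is odd and `G(m,1,r)` if `m`
is even. -/
theorem stmt11 {k : Type*} [Field k] [IsAlgClosed k]
    (hchar : ringChar k = 0 ∨ 2 < ringChar k)
    (m : ℕ) (hm : 0 < m) (hmchar : ¬ (ringChar k ∣ m))
    (ζ : k) (hζ : IsPrimitiveRoot ζ m)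
    (n : ℕ) (g : Matrix (Fin (2 * n)) (Fin (2 * n)) k)
    (hgSp : g.transpose * omegaMat k n * g = omegaMat k n)
    (hordm : g ^ m = 1 ∨ g ^ m = -1)
    (hordleast : ∀ j : ℕ, 0 < j → j < m → g ^ j ≠ 1 ∧ g ^ j ≠ -1)
    (c : Submodule k (Matrix (Fin (2 * n)) (Fin (2 * n)) k))
    (hc : IsCartanSubspace
      {x | x.transpose * omegaMat k n + omegaMat k n * x = 0 ∧ g * x * g⁻¹ = ζ • x} c)
    (r : ℕ) (hr : Module.finrank k c = r) :
    ∃ b : Fin r → Matrix (Fin (2 * n)) (Fin (2 * n)) k,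
      LinearIndependent k b ∧ Submodule.span k (Set.range b) = c ∧
      (Odd m →
        littleWeylSet {h | h.transpose * omegaMat k n * h = omegaMat k n ∧ h * g = g * h}
          c b = GmqrSet k (2 * m) 1 r) ∧
      (Even m →
        littleWeylSet {h | h.transpose * omegaMat k n * h = omegaMat k n ∧ h * g = g * h}
          c b = GmqrSet k m 1 r) := by
  have h2 : (2 : k) ≠ 0 := Ring.two_ne_zero (by omega)
  obtain ⟨b, hb, hspan, hweyl⟩ := stmt11_general h2 hm hζ (omegaMat_transpose k n)
    (isUnit_det_omegaMat k n) hgSp hordm hc hr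
  refine ⟨b, hb, hspan, fun hodd => ?_, fun heven => ?_⟩
  · rwa [(Nat.coprime_two_left.2 hodd).lcm_eq_mul] at hweyl
  · rwa [Nat.lcm_eq_right heven.two_dvd] at hweyl
end

section
/- Let k be an algebraically closed field of characteristic 0 or p > 2, m a positive integer not divisible by the characteristic of k, and ζ ∈ k a primitive m-th root of unity. Let g ∈ SO(2n+1,k) be an element of order exactly m (g^m = I and g^j ≠ I for 0 < j < m). Set 𝔤(1) = {x ∈ so(2n+1,k) : g·x·g⁻¹ = ζ·x} and H = {h ∈ SO(2n+1,k) : h·g = g·h}. Let c be a Cartan subspace of 𝔤(1) and r = dim c. Then, with respect to a suitable basis of c, the little Weyl group of c with respect to H equals G(2m,1,r) if m is odd, and equals G(m,1,r) if m is even. -/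
open Matrix

/-- The `N×N` matrix with `1` on the antidiagonal and `0` elsewhere. -/
def antidiagJ (k : Type*) [Field k] (N : ℕ) : Matrix (Fin N) (Fin N) k :=
  Matrix.of fun i j => if (i : ℕ) + (j : ℕ) = N - 1 then 1 else 0

/-!
Decompose `V = k ^ (2n+1)` into joint eigenspaces of the commuting diagonalizable family `c`. If
`c` acts nontrivially on `v` of weight `λ`, pair `v` with some `w` of weight `-λ`. As `g` shifts
weights by `ζ⁻¹`, the orbits of `v` and `w` under `g` form a *weight string* indexed by the group
`Γ = ±μ_m`, which is `μ_{2m}` for odd `m` and `μ_m` for even `m`. If `-1 ∈ ⟨ζ⟩` the two orbits must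
coincide; this is achieved by choosing `v` with `B(v, ρ(-1) v) = 1` for the symmetric form
`B(·, ρ(-1) ·)`. A maximal orthogonal frame of strings `e (i, ω)` leaves a complement killed by `c`,
so by maximality `c` consists of all maps `D_a : e (i, ω) ↦ χ(ω) a_i e (i, ω)`.

The nonzero weights of `c` on `V` are thus the functionals `χ(ω) a_i`. An element normalizing `c`
permutes them, so it acts on `a` by a monomial matrix with entries in `Γ`. Conversely every
monomial matrix with entries in `Γ` comes from a permutation of the frame, which is an isometry
commuting with `g`; as the dimension is odd, multiplying by `-1` corrects its determinant.
-/

section PairedFamily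

variable {k V W I : Type*} [CommRing k] [AddCommGroup V] [Module k V]
  [AddCommGroup W] [Module k W] {B : LinearMap.BilinForm k V} {ν : I → I} {e : I → V}

/-- The orthogonal complement of the span of the family `e`. -/
abbrev rangeOrthogonal (B : LinearMap.BilinForm k V) (e : I → V) : Submodule k V :=
  B.orthogonal (Submodule.span k (Set.range e))

theorem mem_rangeOrthogonal {v : V} :
    v ∈ rangeOrthogonal B e ↔ ∀ p, B (e p) v = 0 := by
  refine ⟨fun hv p => hv _ (Submodule.subset_span ⟨p, rfl⟩), fun hv u hu => ?_⟩
  induction hu using Submodule.span_induction with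
  | mem x hx =>
    obtain ⟨p, rfl⟩ := hx
    exact hv p
  | zero => exact LinearMap.BilinForm.zero_left v
  | add x y _ _ hx hy => exact (LinearMap.BilinForm.add_left x y v).trans (by simp [hx, hy])
  | smul a x _ hx => exact (LinearMap.BilinForm.smul_left a x v).trans (by simp [hx])

/-- The family `e`, indexed by a type with an involution `ν`, is dual to `e ∘ ν` with respect to
`B`. -/
structure IsPairedBy [DecidableEq I] (B : LinearMap.BilinForm k V) (ν : I → I) (e : I → V) :
    Prop where
  involutive : Function.Involutive ν
  apply_eq : ∀ p q, B (e p) (e q) = if q = ν p then 1 else 0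

/-- The linear map that sends `e p` to `f p` and kills the orthogonal complement of the span of
`e`, for a family `e` that is dual to `e ∘ ν`. It is linear in `f`. -/
def pairedLift [Fintype I] (B : LinearMap.BilinForm k V) (ν : I → I) (e : I → V) :
    (I → W) →ₗ[k] V →ₗ[k] W :=
  ∑ p, LinearMap.smulRightₗ (B (e (ν p))) ∘ₗ LinearMap.proj p

theorem pairedLift_apply [Fintype I] (f : I → W) (v : V) :
    pairedLift B ν e f v = ∑ p, B (e (ν p)) v • f p := by
  simp [pairedLift, LinearMap.sum_apply]

theorem pairedLift_apply_of_mem_rangeOrthogonal [Fintype I] (f : I → W) {v : V}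
    (hv : v ∈ rangeOrthogonal B e) : pairedLift B ν e f v = 0 := by
  simp [pairedLift_apply, mem_rangeOrthogonal.1 hv]

namespace IsPairedBy

variable [DecidableEq I]

theorem ne_zero [Nontrivial k] (he : IsPairedBy B ν e) (p : I) : e p ≠ 0 := by
  intro h
  simpa [h] using he.apply_eq p (ν p)

theorem pairedLift_apply_self [Fintype I] (he : IsPairedBy B ν e) (f : I → W) (p : I) :
    pairedLift B ν e f (e p) = f p := by
  simp [pairedLift_apply, he.apply_eq, he.involutive _]

theorem linearIndependent [Finite I] (he : IsPairedBy B ν e) : LinearIndependent k e := by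
  cases nonempty_fintype I
  rw [Fintype.linearIndependent_iff]
  intro a ha p
  have h := congrArg (B (e (ν p))) ha
  simpa [map_sum, he.apply_eq, he.involutive _] using h

theorem sub_pairedLift_mem_rangeOrthogonal [Fintype I] (he : IsPairedBy B ν e) (v : V) :
    v - pairedLift B ν e e v ∈ rangeOrthogonal B e := by
  rw [mem_rangeOrthogonal]
  intro p
  simp [pairedLift_apply, he.apply_eq, he.involutive _]

theorem span_range_union_rangeOrthogonal [Finite I] (he : IsPairedBy B ν e) :
    Submodule.span k (Set.range e ∪ rangeOrthogonal B e) = ⊤ := by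
  cases nonempty_fintype I
  rw [eq_top_iff]
  rintro v -
  rw [← sub_add_cancel v (pairedLift B ν e e v), pairedLift_apply]
  refine add_mem (Submodule.subset_span (.inr ?_)) (sum_mem fun p _ =>
    Submodule.smul_mem _ _ (Submodule.subset_span (.inl ⟨p, rfl⟩)))
  simpa only [pairedLift_apply, SetLike.mem_coe] using he.sub_pairedLift_mem_rangeOrthogonal v

theorem linearMap_ext [Finite I] (he : IsPairedBy B ν e) {f g : V →ₗ[k] W}
    (hspan : ∀ p, f (e p) = g (e p))
    (horth : ∀ v ∈ rangeOrthogonal B e, f v = g v) : f = g := by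
  refine LinearMap.ext_on he.span_range_union_rangeOrthogonal ?_
  rintro v (⟨p, rfl⟩ | hv)
  exacts [hspan p, horth v hv]

theorem bilinForm_ext [Finite I] (he : IsPairedBy B ν e) {F G : LinearMap.BilinForm k V}
    (hspan : ∀ p q, F (e p) (e q) = G (e p) (e q))
    (hleft : ∀ p, ∀ v ∈ rangeOrthogonal B e, F (e p) v = G (e p) v)
    (hright : ∀ p, ∀ v ∈ rangeOrthogonal B e, F v (e p) = G v (e p))
    (horth : ∀ v ∈ rangeOrthogonal B e,
      ∀ w ∈ rangeOrthogonal B e, F v w = G v w) : F = G :=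
  he.linearMap_ext
    (fun p => he.linearMap_ext (hspan p) (hleft p))
    (fun v hv => he.linearMap_ext (hright · v hv) (horth v hv))

theorem skew_pairedLift_smul [Fintype I] (he : IsPairedBy B ν e) (hB : B.IsRefl) {a : I → k}
    (ha : ∀ p, a (ν p) = -a p) (u v : V) :
    B (pairedLift B ν e (fun p => a p • e p) u) v =
      -B u (pairedLift B ν e (fun p => a p • e p) v) := by
  set D := pairedLift B ν e (fun p => a p • e p)
  suffices h : B.comp D .id = -B.comp .id D from LinearMap.congr_fun₂ h u v
  have hD : ∀ p, D (e p) = a p • e p := he.pairedLift_apply_self _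
  have hD' : ∀ v ∈ rangeOrthogonal B e, D v = 0 :=
    fun v => pairedLift_apply_of_mem_rangeOrthogonal _
  refine he.bilinForm_ext (fun p q => ?_) (fun p v hv => ?_) (fun p v hv => ?_)
    (fun v hv w hw => ?_)
  · by_cases h : q = ν p <;> simp [hD, he.apply_eq, h, ha]
  · simp [hD, hD' v hv, mem_rangeOrthogonal.1 hv p]
  · simp [hD, hD' v hv, hB _ _ (mem_rangeOrthogonal.1 hv p)]
  · simp [hD' v hv, hD' w hw]

end IsPairedBy

/-- The linear map that sends `e p` to `e (τ p)` and fixes the orthogonal complement of the span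
of `e`, for a family `e` that is dual to `e ∘ ν`. -/
def pairedPerm [Fintype I] (B : LinearMap.BilinForm k V) (ν : I → I) (e : I → V) (τ : I → I) :
    V →ₗ[k] V :=
  .id + pairedLift B ν e fun p => e (τ p) - e p

theorem pairedPerm_apply_of_mem_rangeOrthogonal [Fintype I] (τ : I → I) {v : V}
    (hv : v ∈ rangeOrthogonal B e) : pairedPerm B ν e τ v = v := by
  simp [pairedPerm, pairedLift_apply_of_mem_rangeOrthogonal _ hv]

namespace IsPairedBy

variable [Fintype I] [DecidableEq I]

theorem pairedPerm_apply_self (he : IsPairedBy B ν e) (τ : I → I) (p : I) :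
    pairedPerm B ν e τ (e p) = e (τ p) := by
  simp [pairedPerm, he.pairedLift_apply_self]

theorem pairedPerm_isometry (he : IsPairedBy B ν e) (hB : B.IsRefl) {τ : I → I}
    (hτ : Function.Injective τ) (hτν : ∀ p, τ (ν p) = ν (τ p)) :
    B.comp (pairedPerm B ν e τ) (pairedPerm B ν e τ) = B := by
  refine he.bilinForm_ext (fun p q => ?_) (fun p v hv => ?_) (fun p v hv => ?_)
    (fun v hv w hw => ?_)
  · simp [he.pairedPerm_apply_self, he.apply_eq, ← hτν, hτ.eq_iff]
  · simp [he.pairedPerm_apply_self, pairedPerm_apply_of_mem_rangeOrthogonal _ hv,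
      mem_rangeOrthogonal.1 hv]
  · simp [he.pairedPerm_apply_self, pairedPerm_apply_of_mem_rangeOrthogonal _ hv,
      hB _ _ (mem_rangeOrthogonal.1 hv _)]
  · simp [pairedPerm_apply_of_mem_rangeOrthogonal _ hv,
      pairedPerm_apply_of_mem_rangeOrthogonal _ hw]

end IsPairedBy

end PairedFamily

section JointEigenspace

variable {k V : Type*} [Field k] [AddCommGroup V] [Module k V]

/-- The common eigenspace of the endomorphisms in `C` with eigenvalue `lam x` for `x ∈ C`. -/
def jointEigenspace (C : Set (Module.End k V)) (lam : C → k) : Submodule k V :=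
  ⨅ x : C, x.1.eigenspace (lam x)

theorem mem_jointEigenspace {C : Set (Module.End k V)} {lam : C → k} {v : V} :
    v ∈ jointEigenspace C lam ↔ ∀ x : C, x.1 v = lam x • v := by
  simp only [jointEigenspace, Submodule.mem_iInf, Module.End.mem_eigenspace_iff]

theorem maxGenEigenspace_eq_eigenspace_of_iSup_eigenspace_eq_top {x : Module.End k V}
    (hx : ⨆ a, x.eigenspace a = ⊤) (a : k) : x.maxGenEigenspace a = x.eigenspace a :=
  (congrFun ((x.independent_maxGenEigenspace.le_iff_eq_of_iSup_eq_top hx).1 fun _ =>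
    x.eigenspace_le_maxGenEigenspace) a).symm

theorem iSup_jointEigenspace_eq_top [FiniteDimensional k V] {C : Set (Module.End k V)}
    (hcomm : ∀ x ∈ C, ∀ y ∈ C, Commute x y) (hC : ∀ x ∈ C, ⨆ a, x.eigenspace a = ⊤) :
    ⨆ lam, jointEigenspace C lam = ⊤ := by
  have h := Module.End.iSup_iInf_maxGenEigenspace_eq_top_of_iSup_maxGenEigenspace_eq_top_of_commute
    (fun x : C => x.1) (fun x y _ => hcomm x x.2 y y.2)
    fun x => top_le_iff.1 <| (hC x x.2).ge.trans <|
      iSup_mono fun a => x.1.eigenspace_le_maxGenEigenspace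
  simpa only [jointEigenspace,
    maxGenEigenspace_eq_eigenspace_of_iSup_eigenspace_eq_top (hC _ (Subtype.prop _))] using h

theorem exists_mem_apply_ne_zero_of_iSup_eq_top {ι W : Type*} [AddCommGroup W] [Module k W]
    {p : ι → Submodule k V} (hp : ⨆ i, p i = ⊤) {f : V →ₗ[k] W} (hf : f ≠ 0) :
    ∃ i, ∃ v ∈ p i, f v ≠ 0 := by
  by_contra! h
  refine hf (LinearMap.ker_eq_top.1 (top_le_iff.1 ?_))
  rw [← hp]
  exact iSup_le h

end JointEigenspace

theorem exists_mem_apply_self_eq_one {k V : Type*} [Field k] [AddCommGroup V] [Module k V]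
    (h2 : (2 : k) ≠ 0) (hsq : ∀ a : k, IsSquare a) {Q : LinearMap.BilinForm k V}
    (hQ : Q.IsSymm) (S : Submodule k V) {u v : V} (hu : u ∈ S) (hv : v ∈ S) (huv : Q u v ≠ 0) :
    ∃ x ∈ S, Q x x = 1 := by
  have : Invertible (2 : k) := invertibleOfNonzero h2
  have hne : Q.restrict S ≠ 0 := fun h => huv (LinearMap.congr_fun₂ h ⟨u, hu⟩ ⟨v, hv⟩)
  obtain ⟨⟨x, hx⟩, hxx⟩ :=
    LinearMap.BilinForm.exists_bilinForm_self_ne_zero hne ⟨fun a b => hQ.eq a b⟩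
  obtain ⟨t, ht⟩ := hsq (Q x x)
  have hxx : Q x x ≠ 0 := hxx
  have ht0 : t ≠ 0 := by
    rintro rfl
    simp [ht] at hxx
  refine ⟨t⁻¹ • x, S.smul_mem _ hx, ?_⟩
  simp [ht, ht0]

theorem exists_mem_apply_involution_eq_one {k V : Type*} [Field k] [AddCommGroup V] [Module k V]
    (h2 : (2 : k) ≠ 0) (hsq : ∀ a : k, IsSquare a) {B : LinearMap.BilinForm k V} (hB : B.IsSymm)
    {σ : Module.End k V} (hσ : Function.Involutive σ) (hσB : ∀ u v, B (σ u) (σ v) = B u v)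
    {S : Submodule k V} {v w : V} (hv : v ∈ S) (hw : σ w ∈ S) (hvw : B v w ≠ 0) :
    ∃ u ∈ S, B u (σ u) = 1 := by
  have hsymm : (B.comp .id σ).IsSymm := ⟨fun a b => by
    rw [LinearMap.BilinForm.comp_apply, LinearMap.BilinForm.comp_apply, LinearMap.id_apply,
      LinearMap.id_apply, ← hσB, hσ, hB.eq]⟩
  refine exists_mem_apply_self_eq_one h2 hsq hsymm S hv hw ?_
  rwa [LinearMap.BilinForm.comp_apply, hσ]

section WeightString

variable {k V Γ : Type*} [Field k] [AddCommGroup V] [Module k V] [CommGroup Γ]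
  {A : Subgroup Γ}

/-- The graded piece of the orthogonal Lie algebra of `B` consisting of the skew endomorphisms
that are twisted by the character `χ` under the isometries `ρ η`. -/
def skewTwisted (B : LinearMap.BilinForm k V) (χ : Γ →* k) (ρ : Representation k A V) :
    Set (Module.End k V) :=
  {x | (∀ u v, B (x u) v = -B u (x v)) ∧ ∀ (η : A) (v : V), x (ρ η v) = χ η • ρ η (x v)}

variable {B : LinearMap.BilinForm k V} {χ : Γ →* k} {ρ : Representation k A V}
  {C : Set (Module.End k V)}

theorem rep_mem_jointEigenspace (hC : C ⊆ skewTwisted B χ ρ) (η : A) {lam : C → k} {v : V}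
    (hv : v ∈ jointEigenspace C lam) : ρ η v ∈ jointEigenspace C (χ η • lam) := by
  rw [mem_jointEigenspace] at hv ⊢
  intro x
  rw [(hC x.2).2, hv x, map_smul, smul_smul, Pi.smul_apply, smul_eq_mul]

theorem eq_neg_of_apply_ne_zero (hC : C ⊆ skewTwisted B χ ρ) {lam lam' : C → k} {u v : V}
    (hu : u ∈ jointEigenspace C lam) (hv : v ∈ jointEigenspace C lam') (huv : B u v ≠ 0) :
    lam' = -lam := by
  rw [mem_jointEigenspace] at hu hv
  funext x
  have h := (hC x.2).1 u v
  rw [hu x, hv x, map_smul, map_smul, LinearMap.smul_apply, smul_eq_mul, smul_eq_mul,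
    ← neg_mul] at h
  rw [Pi.neg_apply, mul_right_cancel₀ huv h, neg_neg]

variable [HasDistribNeg Γ]

/-- A family of joint eigenvectors of `C` indexed by `Γ`, dual to its reindexing by `Neg.neg`,
permuted simply transitively by `ρ` up to sign, with weights in proportion to `χ`. -/
structure IsWeightString [DecidableEq Γ] (B : LinearMap.BilinForm k V) (χ : Γ →* k)
    (ρ : Representation k A V) (C : Set (Module.End k V)) (b : Γ → V) : Prop where
  apply_eq : ∀ ω ω', B (b ω) (b ω') = if ω' = -ω then 1 else 0
  map_rep : ∀ (η : A) ω, ρ η (b ω) = b (η * ω)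
  exists_weight : ∃ lam : C → k, ∀ ω, b ω ∈ jointEigenspace C (χ ω • lam)

/-- A family of weight strings with the same grading group that are pairwise orthogonal. -/
structure IsWeightFrame [DecidableEq Γ] {ι : Type*} (B : LinearMap.BilinForm k V) (χ : Γ →* k)
    (ρ : Representation k A V) (C : Set (Module.End k V)) (e : ι × Γ → V) : Prop where
  string : ∀ i, IsWeightString B χ ρ C fun ω => e (i, ω)
  orthogonal : ∀ i j, i ≠ j → ∀ ω ω', B (e (i, ω)) (e (j, ω')) = 0

namespace IsWeightFrame

variable [DecidableEq Γ] {ι : Type*} {e : ι × Γ → V}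

theorem isPairedBy [DecidableEq ι] (he : IsWeightFrame B χ ρ C e) :
    IsPairedBy B (Prod.map id Neg.neg) e where
  involutive := Function.Involutive.prodMap (fun _ => rfl) neg_involutive
  apply_eq := by
    rintro ⟨i, ω⟩ ⟨j, ω'⟩
    by_cases hij : i = j
    · subst hij
      simp [(he.string i).apply_eq]
    · simp [he.orthogonal i j hij, Ne.symm hij]

theorem rep_mem_rangeOrthogonal (he : IsWeightFrame B χ ρ C e)
    (hρ : ∀ η u v, B (ρ η u) (ρ η v) = B u v) (η : A) {v : V}
    (hv : v ∈ rangeOrthogonal B e) :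
    ρ η v ∈ rangeOrthogonal B e := by
  rw [mem_rangeOrthogonal] at hv ⊢
  rintro ⟨i, ω⟩
  have h : e (i, ω) = ρ η (e (i, (η : Γ)⁻¹ * ω)) := by
    rw [(he.string i).map_rep, mul_inv_cancel_left]
  rw [h, hρ, hv]

theorem sub_pairedLift_mem_jointEigenspace [Fintype Γ] [Fintype ι] (he : IsWeightFrame B χ ρ C e)
    (hχ : ∀ ω, χ (-ω) = -χ ω) (hC : C ⊆ skewTwisted B χ ρ)
    {lam : C → k} {v : V} (hv : v ∈ jointEigenspace C lam) :
    v - pairedLift B (Prod.map id Neg.neg) e e v ∈ jointEigenspace C lam := by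
  rw [pairedLift_apply]
  refine sub_mem hv (sum_mem fun ⟨i, ω⟩ _ => ?_)
  rw [Prod.map_apply, id]
  by_cases h : B (e (i, -ω)) v = 0
  · simp only [h, zero_smul, zero_mem]
  · obtain ⟨μ, hμ⟩ := (he.string i).exists_weight
    have hlam : lam = χ ω • μ := by
      rw [eq_neg_of_apply_ne_zero hC (hμ (-ω)) hv h, hχ, neg_smul, neg_neg]
    exact Submodule.smul_mem _ _ (hlam ▸ hμ ω)

variable [Finite Γ] [Finite ι]

theorem exists_mem_jointEigenspace_of_ne_zero {W : Type*} [AddCommGroup W] [Module k W]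
    (he : IsWeightFrame B χ ρ C e) (hχ : ∀ ω, χ (-ω) = -χ ω) (hC : C ⊆ skewTwisted B χ ρ)
    (htop : ⨆ lam, jointEigenspace C lam = ⊤) {f : V →ₗ[k] W} {v : V}
    (hv : v ∈ rangeOrthogonal B e) (hfv : f v ≠ 0) :
    ∃ lam, ∃ u ∈ rangeOrthogonal B e ⊓ jointEigenspace C lam,
      f u ≠ 0 := by
  classical
  cases nonempty_fintype Γ
  cases nonempty_fintype ι
  have hne : f ∘ₗ (.id - pairedLift B (Prod.map id Neg.neg) e e) ≠ 0 := fun h =>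
    hfv (by simpa [pairedLift_apply_of_mem_rangeOrthogonal e hv] using LinearMap.congr_fun h v)
  obtain ⟨lam, u, hu, hfu⟩ := exists_mem_apply_ne_zero_of_iSup_eq_top htop hne
  exact ⟨lam, _, ⟨he.isPairedBy.sub_pairedLift_mem_rangeOrthogonal u,
    he.sub_pairedLift_mem_jointEigenspace hχ hC hu⟩, hfu⟩

theorem exists_dual_pair (he : IsWeightFrame B χ ρ C e) (hχ : ∀ ω, χ (-ω) = -χ ω)
    (hB : B.IsRefl) (hBn : B.Nondegenerate) (hC : C ⊆ skewTwisted B χ ρ)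
    (htop : ⨆ lam, jointEigenspace C lam = ⊤) {x : Module.End k V} (hx : x ∈ C) {u : V}
    (hu : u ∈ rangeOrthogonal B e) (hxu : x u ≠ 0) :
    ∃ lam : C → k, lam ≠ 0 ∧
      ∃ v ∈ rangeOrthogonal B e ⊓ jointEigenspace C lam,
      ∃ w ∈ rangeOrthogonal B e ⊓ jointEigenspace C (-lam),
        B v w = 1 := by
  classical
  cases nonempty_fintype Γ
  cases nonempty_fintype ι
  obtain ⟨lam, v, ⟨hvo, hv⟩, hxv⟩ := he.exists_mem_jointEigenspace_of_ne_zero hχ hC htop hu hxu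
  rw [mem_jointEigenspace.1 hv ⟨x, hx⟩, smul_ne_zero_iff] at hxv
  obtain ⟨w', hw'⟩ : ∃ w', B v w' ≠ 0 := by
    by_contra! h
    exact hxv.2 (hBn.1 v h)
  have hproj : B v (w' - pairedLift B (Prod.map id Neg.neg) e e w') = B v w' := by
    simp [pairedLift_apply, hB _ _ (mem_rangeOrthogonal.1 hvo _)]
  obtain ⟨lam', w, ⟨hwo, hw⟩, hvw⟩ := he.exists_mem_jointEigenspace_of_ne_zero (f := B v) hχ hC
    htop (he.isPairedBy.sub_pairedLift_mem_rangeOrthogonal w') (hproj.trans_ne hw')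
  obtain rfl := eq_neg_of_apply_ne_zero hC hv hw hvw
  refine ⟨lam, fun h => hxv.1 (congrFun h _), v, ⟨hvo, hv⟩, (B v w)⁻¹ • w,
    Submodule.smul_mem _ _ ⟨hwo, hw⟩, ?_⟩
  rw [map_smul, smul_eq_mul, inv_mul_cancel₀ hvw]

end IsWeightFrame

open Classical in
/-- The orbit of the pair `v, w` under `A ∪ -A = Γ`, where `η ∈ A` maps to `ρ η v` and `-η` maps
to `ρ η w`. The values agree on `A ∩ -A` if `w = ρ (-1) v` whenever `-1 ∈ A`. -/
noncomputable def signedOrbit (ρ : Representation k A V) (hA : ∀ ω, ω ∈ A ∨ -ω ∈ A) (v w : V)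
    (ω : Γ) : V :=
  if h : ω ∈ A then ρ ⟨ω, h⟩ v else ρ ⟨-ω, (hA ω).resolve_left h⟩ w

section SignedOrbit

variable {hA : ∀ ω, ω ∈ A ∨ -ω ∈ A} {v w : V}

theorem signedOrbit_coe (η : A) : signedOrbit ρ hA v w η = ρ η v :=
  dif_pos η.2

theorem signedOrbit_neg_coe (hvw : ∀ h : (-1 : Γ) ∈ A, w = ρ ⟨-1, h⟩ v) (η : A) :
    signedOrbit ρ hA v w (-η) = ρ η w := by
  by_cases h : -(η : Γ) ∈ A
  · have h1 : (-1 : Γ) ∈ A := by simpa using A.mul_mem h (A.inv_mem η.2)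
    have hmul : (⟨-η, h⟩ : A) = η * ⟨-1, h1⟩ := Subtype.ext (by simp)
    rw [signedOrbit, dif_pos h, hmul, map_mul, Module.End.mul_apply, ← hvw h1]
  · rw [signedOrbit, dif_neg h]
    congr
    exact neg_neg _

theorem exists_eq_or_eq_neg (hA : ∀ ω, ω ∈ A ∨ -ω ∈ A) (ω : Γ) :
    ∃ η : A, ω = η ∨ ω = -η := by
  rcases hA ω with h | h
  exacts [⟨⟨ω, h⟩, .inl rfl⟩, ⟨⟨-ω, h⟩, .inr (neg_neg ω).symm⟩]

theorem signedOrbit_mem {S : Submodule k V} (hS : ∀ (η : A), ∀ u ∈ S, ρ η u ∈ S) (hv : v ∈ S)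
    (hw : w ∈ S) (ω : Γ) : signedOrbit ρ hA v w ω ∈ S := by
  unfold signedOrbit
  split_ifs with h
  exacts [hS _ v hv, hS _ w hw]

theorem isWeightString_signedOrbit [DecidableEq Γ] (hχ : ∀ ω, χ (-ω) = -χ ω)
    (hχi : Function.Injective χ) (hB : B.IsSymm) (hρ : ∀ η u v, B (ρ η u) (ρ η v) = B u v)
    (hC : C ⊆ skewTwisted B χ ρ) (hvw : ∀ h : (-1 : Γ) ∈ A, w = ρ ⟨-1, h⟩ v) {lam : C → k}
    (hlam : lam ≠ 0) (hv : v ∈ jointEigenspace C lam) (hw : w ∈ jointEigenspace C (-lam))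
    (hvw1 : B v w = 1) : IsWeightString B χ ρ C (signedOrbit ρ hA v w) := by
  have hweight (ω : Γ) : signedOrbit ρ hA v w ω ∈ jointEigenspace C (χ ω • lam) := by
    obtain ⟨η, rfl | rfl⟩ := exists_eq_or_eq_neg hA ω
    · rw [signedOrbit_coe]
      exact rep_mem_jointEigenspace hC η hv
    · rw [signedOrbit_neg_coe hvw, hχ, neg_smul, ← smul_neg]
      exact rep_mem_jointEigenspace hC η hw
  refine ⟨fun ω ω' => ?_, fun η ω => ?_, lam, hweight⟩
  · split_ifs with h
    · subst h
      obtain ⟨η, rfl | rfl⟩ := exists_eq_or_eq_neg hA ω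
      · rw [signedOrbit_coe, signedOrbit_neg_coe hvw, hρ, hvw1]
      · rw [neg_neg, signedOrbit_coe, signedOrbit_neg_coe hvw, hρ, hB.eq, hvw1]
    · by_contra hne
      have hprop := eq_neg_of_apply_ne_zero hC (hweight ω) (hweight ω') hne
      rw [← neg_smul, ← hχ] at hprop
      exact h (hχi (smul_left_injective k hlam hprop))
  · obtain ⟨θ, rfl | rfl⟩ := exists_eq_or_eq_neg hA ω
    · rw [signedOrbit_coe, ← Module.End.mul_apply, ← map_mul, ← signedOrbit_coe, Subgroup.coe_mul]
    · rw [signedOrbit_neg_coe hvw, ← Module.End.mul_apply, ← map_mul,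
        ← signedOrbit_neg_coe (hA := hA) hvw, Subgroup.coe_mul, mul_neg]

end SignedOrbit

theorem exists_pair_eq_rep_neg_one (h2 : (2 : k) ≠ 0) (hsq : -1 ∈ A → ∀ a : k, IsSquare a)
    (hB : B.IsSymm) (hρ : ∀ η u v, B (ρ η u) (ρ η v) = B u v) {S S' : Submodule k V}
    (hSS' : ∀ (h : -1 ∈ A), ∀ u ∈ S, ρ ⟨-1, h⟩ u ∈ S')
    (hS'S : ∀ (h : -1 ∈ A), ∀ u ∈ S', ρ ⟨-1, h⟩ u ∈ S)
    {v w : V} (hv : v ∈ S) (hw : w ∈ S') (hvw : B v w = 1) :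
    ∃ v ∈ S, ∃ w ∈ S', B v w = 1 ∧ ∀ h : -1 ∈ A, w = ρ ⟨-1, h⟩ v := by
  by_cases h1 : -1 ∈ A
  · have hinv : Function.Involutive (ρ ⟨-1, h1⟩) := fun u => by
      rw [← Module.End.mul_apply, ← map_mul,
        show (⟨-1, h1⟩ * ⟨-1, h1⟩ : A) = 1 from Subtype.ext (by simp), map_one,
        Module.End.one_apply]
    obtain ⟨u, hu, huu⟩ := exists_mem_apply_involution_eq_one h2 (hsq h1) hB hinv (hρ _) hv
      (hS'S h1 w hw) (hvw.trans_ne one_ne_zero)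
    exact ⟨u, hu, _, hSS' h1 u hu, huu, fun _ => rfl⟩
  · exact ⟨v, hv, w, hw, hvw, fun h => absurd h h1⟩

namespace IsWeightFrame

variable [DecidableEq Γ]

theorem exists_isWeightString {ι : Type*} [Finite Γ] [Finite ι] {e : ι × Γ → V}
    (he : IsWeightFrame B χ ρ C e) (hχ : ∀ ω, χ (-ω) = -χ ω)
    (hχi : Function.Injective χ) (h2 : (2 : k) ≠ 0) (hA : ∀ ω, ω ∈ A ∨ -ω ∈ A)
    (hsq : -1 ∈ A → ∀ a : k, IsSquare a)
    (hB : B.IsSymm) (hBn : B.Nondegenerate) (hρ : ∀ η u v, B (ρ η u) (ρ η v) = B u v)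
    (hC : C ⊆ skewTwisted B χ ρ) (htop : ⨆ lam, jointEigenspace C lam = ⊤)
    {x : Module.End k V} (hx : x ∈ C) {u : V} (hu : u ∈ rangeOrthogonal B e) (hxu : x u ≠ 0) :
    ∃ b, IsWeightString B χ ρ C b ∧ ∀ ω, b ω ∈ rangeOrthogonal B e := by
  obtain ⟨lam, hlam, v, hv, w, hw, hvw⟩ :=
    he.exists_dual_pair hχ hB.isRefl hBn hC htop hx hu hxu
  have hneg (h : -1 ∈ A) (μ : C → k) {u : V} (hu : u ∈ rangeOrthogonal B e ⊓ jointEigenspace C μ) :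
      ρ ⟨-1, h⟩ u ∈ rangeOrthogonal B e ⊓ jointEigenspace C (-μ) := by
    refine ⟨he.rep_mem_rangeOrthogonal hρ _ hu.1, ?_⟩
    simpa only [hχ, map_one, neg_smul, one_smul, SetLike.mem_coe] using
      rep_mem_jointEigenspace hC ⟨-1, h⟩ hu.2
  obtain ⟨v, hv, w, hw, hvw, hwv⟩ := exists_pair_eq_rep_neg_one h2 hsq hB hρ
    (fun h _ => hneg h lam) (fun h _ hu => neg_neg lam ▸ hneg h (-lam) hu) hv hw hvw
  exact ⟨signedOrbit ρ hA v w,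
    isWeightString_signedOrbit hχ hχi hB hρ hC hwv hlam hv.2 hw.2 hvw,
    signedOrbit_mem (fun η u hu => he.rep_mem_rangeOrthogonal hρ η hu) hv.1 hw.1⟩

theorem cons {s : ℕ} {e : Fin s × Γ → V} (he : IsWeightFrame B χ ρ C e) (hB : B.IsRefl) {b : Γ → V}
    (hb : IsWeightString B χ ρ C b)
    (hbe : ∀ ω, b ω ∈ rangeOrthogonal B e) :
    IsWeightFrame B χ ρ C
      fun p : Fin (s + 1) × Γ => Fin.cons (α := fun _ => Γ → V) b (Function.curry e) p.1 p.2 := by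
  simp only [mem_rangeOrthogonal] at hbe
  refine ⟨fun i => ?_, fun i j hij ω ω' => ?_⟩
  · cases i using Fin.cases
    exacts [hb, he.string _]
  · cases i using Fin.cases <;> cases j using Fin.cases
    · exact absurd rfl hij
    · exact hB _ _ (hbe ω _)
    · exact hbe ω' _
    · exact he.orthogonal _ _ (fun h => hij (congrArg Fin.succ h)) ω ω'

end IsWeightFrame

theorem exists_isWeightFrame [DecidableEq Γ] [Finite Γ] [FiniteDimensional k V]
    (hχ : ∀ ω, χ (-ω) = -χ ω) (hχi : Function.Injective χ) (h2 : (2 : k) ≠ 0)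
    (hA : ∀ ω, ω ∈ A ∨ -ω ∈ A) (hsq : -1 ∈ A → ∀ a : k, IsSquare a)
    (hB : B.IsSymm) (hBn : B.Nondegenerate) (hρ : ∀ η u v, B (ρ η u) (ρ η v) = B u v)
    (hC : C ⊆ skewTwisted B χ ρ) (htop : ⨆ lam, jointEigenspace C lam = ⊤) :
    ∃ (s : ℕ) (e : Fin s × Γ → V), IsWeightFrame B χ ρ C e ∧
      ∀ x ∈ C, ∀ v ∈ rangeOrthogonal B e, x v = 0 := by
  cases nonempty_fintype Γ
  by_contra! hmax
  have hframe (s : ℕ) : ∃ e : Fin s × Γ → V, IsWeightFrame B χ ρ C e := by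
    induction s with
    | zero => exact ⟨fun p => p.1.elim0, fun i => i.elim0, fun i => i.elim0⟩
    | succ s ih =>
      obtain ⟨e, he⟩ := ih
      obtain ⟨x, hx, v, hv, hxv⟩ := hmax s e he
      obtain ⟨b, hb, hbe⟩ := he.exists_isWeightString hχ hχi h2 hA hsq hB hBn hρ hC htop hx hv hxv
      exact ⟨_, he.cons hB.isRefl hb hbe⟩
  obtain ⟨e, he⟩ := hframe (Module.finrank k V + 1)
  have hcard := he.isPairedBy.linearIndependent.fintype_card_le_finrank
  rw [Fintype.card_prod, Fintype.card_fin] at hcard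
  exact absurd ((Nat.le_mul_of_pos_right _ Fintype.card_pos).trans hcard) (by lia)

end WeightString

theorem bijective_of_apply_eq_mul {k ι : Type*} [Field k] [Finite ι] {w : (ι → k) →ₗ[k] ι → k}
    (hw : Function.Injective w) {τ : ι → ι} {z : ι → k} (h : ∀ a i, w a i = z i * a (τ i)) :
    Function.Bijective τ := by
  classical
  refine Finite.surjective_iff_bijective.1 fun j => ?_
  by_contra! hj
  have hzero : w (Pi.single j 1) = w 0 := by
    funext i
    rw [h, Pi.single_eq_of_ne (hj i), mul_zero, map_zero, Pi.zero_apply]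
  simpa using congrFun (hw hzero) j

section CartanMap

variable {k V Γ ι : Type*} [Field k] [AddCommGroup V] [Module k V] [CommGroup Γ]
  [HasDistribNeg Γ] [Fintype Γ] [Fintype ι]

/-- The parametrisation of the Cartan subspace attached to a weight frame `e`: the image of `a`
scales `e (i, ω)` by `χ ω * a i` and kills the orthogonal complement of the span of `e`. -/
def cartanMap (B : LinearMap.BilinForm k V) (χ : Γ →* k) (e : ι × Γ → V) :
    (ι → k) →ₗ[k] Module.End k V :=
  pairedLift B (Prod.map id Neg.neg) e ∘ₗ
    LinearMap.pi fun p => (χ p.2 • LinearMap.proj p.1).smulRight (e p)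

variable {B : LinearMap.BilinForm k V} {χ : Γ →* k} {e : ι × Γ → V}

theorem cartanMap_apply_of_mem_rangeOrthogonal (a : ι → k) {v : V}
    (hv : v ∈ rangeOrthogonal B e) : cartanMap B χ e a v = 0 :=
  pairedLift_apply_of_mem_rangeOrthogonal _ hv

variable [DecidableEq Γ]

namespace IsPairedBy

variable [DecidableEq ι]

theorem cartanMap_apply_self (he : IsPairedBy B (Prod.map id Neg.neg) e) (a : ι → k)
    (p : ι × Γ) : cartanMap B χ e a (e p) = (χ p.2 * a p.1) • e p :=
  he.pairedLift_apply_self _ p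

theorem cartanMap_injective (he : IsPairedBy B (Prod.map id Neg.neg) e) :
    Function.Injective (cartanMap B χ e) := by
  rw [← LinearMap.ker_eq_bot, LinearMap.ker_eq_bot']
  intro a ha
  funext i
  have h := he.cartanMap_apply_self (χ := χ) a (i, 1)
  rw [ha, LinearMap.zero_apply, map_one, one_mul, eq_comm, smul_eq_zero] at h
  exact h.resolve_right (he.ne_zero _)

theorem cartanMap_commute (he : IsPairedBy B (Prod.map id Neg.neg) e) (a a' : ι → k) :
    Commute (cartanMap B χ e a) (cartanMap B χ e a') := by
  refine he.linearMap_ext (fun p => ?_) fun v hv => ?_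
  · simp only [Module.End.mul_apply, he.cartanMap_apply_self, map_smul]
    exact smul_comm _ _ _
  · simp only [Module.End.mul_apply, cartanMap_apply_of_mem_rangeOrthogonal _ hv, map_zero]

theorem iSup_eigenspace_cartanMap (he : IsPairedBy B (Prod.map id Neg.neg) e) (a : ι → k) :
    ⨆ t, (cartanMap B χ e a).eigenspace t = ⊤ := by
  rw [← top_le_iff, ← he.span_range_union_rangeOrthogonal, Submodule.span_le]
  rintro v (⟨p, rfl⟩ | hv)
  · exact Submodule.mem_iSup_of_mem (χ p.2 * a p.1)
      (Module.End.mem_eigenspace_iff.2 (he.cartanMap_apply_self a p))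
  · refine Submodule.mem_iSup_of_mem 0 (Module.End.mem_eigenspace_iff.2 ?_)
    rw [cartanMap_apply_of_mem_rangeOrthogonal a hv, zero_smul]

theorem cartanMap_skew (he : IsPairedBy B (Prod.map id Neg.neg) e) (hB : B.IsRefl)
    (hχ : ∀ ω, χ (-ω) = -χ ω) (a : ι → k) (u v : V) :
    B (cartanMap B χ e a u) v = -B u (cartanMap B χ e a v) :=
  he.skew_pairedLift_smul hB (a := fun p => χ p.2 * a p.1)
    (fun p => by rw [Prod.map_snd, Prod.map_fst, hχ, neg_mul, id]) u v

theorem exists_weight_eq (he : IsPairedBy B (Prod.map id Neg.neg) e) (hB : B.IsRefl)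
    (hχ : ∀ ω, χ (-ω) = -χ ω) {v : V} (hv : v ≠ 0) {f : (ι → k) → k}
    (hf : ∀ a, cartanMap B χ e a v = f a • v) (hf0 : f ≠ 0) :
    ∃ p : ι × Γ, ∀ a, f a = χ p.2 * a p.1 := by
  obtain ⟨a, ha⟩ := Function.ne_iff.1 hf0
  have hvo : v ∉ rangeOrthogonal B e := fun h =>
    smul_ne_zero ha hv ((hf a).symm.trans (cartanMap_apply_of_mem_rangeOrthogonal a h))
  rw [mem_rangeOrthogonal, not_forall] at hvo
  obtain ⟨⟨i, ω⟩, hp⟩ := hvo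
  refine ⟨(i, -ω), fun a => ?_⟩
  have hskew := he.cartanMap_skew hB hχ a (e (i, ω)) v
  rw [hf, he.cartanMap_apply_self, map_smul, map_smul, LinearMap.smul_apply, smul_eq_mul,
    smul_eq_mul, ← neg_mul] at hskew
  rw [hχ, neg_mul, mul_right_cancel₀ hp hskew, neg_neg]

theorem exists_perm_of_cartanMap_conj
    (he : IsPairedBy B (Prod.map id Neg.neg) e) (hB : B.IsRefl)
    (hχ : ∀ ω, χ (-ω) = -χ ω) {h : Module.End k V} (hh : Function.Bijective h)
    {w : (ι → k) →ₗ[k] ι → k}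
    (hw : ∀ a, h * cartanMap B χ e a = cartanMap B χ e (w a) * h) :
    ∃ (τ : Equiv.Perm ι) (α : ι → Γ), ∀ a i, w a i = χ (α i) * a (τ i) := by
  have hwi : Function.Injective w := fun a b hab => he.cartanMap_injective (χ := χ) <| by
    refine LinearMap.ext fun v => hh.1 ?_
    have := (hw a).trans ((hab ▸ rfl : _ = cartanMap B χ e (w b) * h).trans (hw b).symm)
    exact LinearMap.congr_fun this v
  have hrow (i : ι) : ∃ p : ι × Γ, ∀ a, w a i = χ p.2 * a p.1 := by
    obtain ⟨v, hv⟩ := hh.2 (e (i, 1))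
    refine he.exists_weight_eq hB hχ (v := v) (f := fun a => w a i) ?_ (fun a => hh.1 ?_) ?_
    · rintro rfl
      exact he.ne_zero (i, 1) (hv ▸ map_zero h)
    · rw [map_smul, hv, ← Module.End.mul_apply, hw, Module.End.mul_apply, hv,
        he.cartanMap_apply_self, map_one, one_mul]
    · obtain ⟨a, ha⟩ := LinearMap.injective_iff_surjective.1 hwi (Pi.single i 1)
      exact fun h0 => one_ne_zero ((by simp [ha] : (1 : k) = w a i).trans (congrFun h0 a))
  choose p hp using hrow
  have hbij := bijective_of_apply_eq_mul hwi (z := fun i => χ (p i).2) (τ := fun i => (p i).1)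
    fun a i => hp i a
  exact ⟨.ofBijective _ hbij, fun i => (p i).2, fun a i => hp i a⟩

end IsPairedBy

namespace IsWeightFrame

variable {A : Subgroup Γ} {ρ : Representation k A V} {C : Set (Module.End k V)}

theorem cartanMap_mem_skewTwisted (he : IsWeightFrame B χ ρ C e)
    (hB : B.IsRefl) (hχ : ∀ ω, χ (-ω) = -χ ω) (hρ : ∀ η u v, B (ρ η u) (ρ η v) = B u v)
    (a : ι → k) : cartanMap B χ e a ∈ skewTwisted B χ ρ := by
  classical
  refine ⟨he.isPairedBy.cartanMap_skew hB hχ a, fun η => ?_⟩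
  suffices h : cartanMap B χ e a * ρ η = χ η • (ρ η * cartanMap B χ e a) from
    LinearMap.congr_fun h
  refine he.isPairedBy.linearMap_ext (fun ⟨i, ω⟩ => ?_) fun v hv => ?_
  · have hmap : ρ η (e (i, ω)) = e (i, η * ω) := (he.string i).map_rep η ω
    simp only [Module.End.mul_apply, LinearMap.smul_apply, hmap,
      he.isPairedBy.cartanMap_apply_self, map_smul, smul_smul, map_mul, mul_assoc]
  · simp only [Module.End.mul_apply, LinearMap.smul_apply,
      cartanMap_apply_of_mem_rangeOrthogonal _ hv,
      cartanMap_apply_of_mem_rangeOrthogonal _ (he.rep_mem_rangeOrthogonal hρ η hv), map_zero,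
      smul_zero]

theorem subset_range_cartanMap (he : IsWeightFrame B χ ρ C e)
    (hkill : ∀ x ∈ C, ∀ v ∈ rangeOrthogonal B e, x v = 0) :
    C ⊆ LinearMap.range (cartanMap B χ e) := by
  classical
  intro x hx
  choose lam hlam using fun i => (he.string i).exists_weight
  refine ⟨fun i => lam i ⟨x, hx⟩, he.isPairedBy.linearMap_ext (fun ⟨i, ω⟩ => ?_) fun v hv => ?_⟩
  · rw [he.isPairedBy.cartanMap_apply_self]
    exact (mem_jointEigenspace.1 (hlam i ω) ⟨x, hx⟩).symm
  · rw [cartanMap_apply_of_mem_rangeOrthogonal _ hv, hkill x hx v hv]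

theorem exists_isometry_of_perm (he : IsWeightFrame B χ ρ C e)
    (hB : B.IsRefl) (hρ : ∀ η u v, B (ρ η u) (ρ η v) = B u v) {w : (ι → k) → ι → k}
    {τ : Equiv.Perm ι} {α : ι → Γ} (hw : ∀ a i, w a i = χ (α i) * a (τ i)) :
    ∃ T : Module.End k V, B.comp T T = B ∧ (∀ η, Commute T (ρ η)) ∧
      ∀ a, T * cartanMap B χ e a = cartanMap B χ e (w a) * T := by
  classical
  let π : Equiv.Perm (ι × Γ) := Equiv.prodShear τ fun i => Equiv.mulLeft (α i)
  have hp := he.isPairedBy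
  have hT (p : ι × Γ) :
      pairedPerm B (Prod.map id Neg.neg) e π.symm (e (π p)) = e p := by
    rw [hp.pairedPerm_apply_self, Equiv.symm_apply_apply]
  refine ⟨pairedPerm B (Prod.map id Neg.neg) e π.symm,
    hp.pairedPerm_isometry hB π.symm.injective fun p => ?_, fun η => ?_, fun a => ?_⟩
  · obtain ⟨⟨i, ω⟩, rfl⟩ := π.surjective p
    rw [Equiv.symm_apply_eq, Equiv.symm_apply_apply]
    exact Prod.ext rfl (mul_neg (α i) ω).symm
  · refine hp.linearMap_ext (π.surjective.forall.2 fun ⟨i, ω⟩ => ?_) fun v hv => ?_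
    · have hmap : ρ η (e (π (i, ω))) = e (π (i, (η : Γ) * ω)) :=
        ((he.string (τ i)).map_rep η (α i * ω)).trans
          (congrArg e (Prod.ext rfl (mul_left_comm ..)))
      rw [Module.End.mul_apply, Module.End.mul_apply, hmap, hT, hT]
      exact ((he.string i).map_rep η ω).symm
    · simp only [Module.End.mul_apply, pairedPerm_apply_of_mem_rangeOrthogonal _ hv,
        pairedPerm_apply_of_mem_rangeOrthogonal _ (he.rep_mem_rangeOrthogonal hρ η hv)]
  · refine hp.linearMap_ext (π.surjective.forall.2 fun ⟨i, ω⟩ => ?_) fun v hv => ?_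
    · have hweight : χ (α i * ω) * a (τ i) = χ ω * w a i := by
        rw [hw, map_mul, mul_assoc, mul_left_comm]
      simp only [Module.End.mul_apply, hp.cartanMap_apply_self, map_smul, hT]
      exact congrArg (· • e (i, ω)) hweight
    · simp only [Module.End.mul_apply, pairedPerm_apply_of_mem_rangeOrthogonal _ hv,
        cartanMap_apply_of_mem_rangeOrthogonal _ hv, map_zero]

end IsWeightFrame

end CartanMap

section Diagonalizable

theorem exists_eigenbasis {k V N : Type*} [Field k] [AddCommGroup V] [Module k V] [Finite N]
    (b₀ : Module.Basis N k V) {f : Module.End k V} (hf : ⨆ a, f.eigenspace a = ⊤) :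
    ∃ (b : Module.Basis N k V) (d : N → k), ∀ i, f (b i) = d i • b i := by
  rw [Submodule.iSup_eq_span] at hf
  have : FiniteDimensional k V := b₀.finiteDimensional_of_finite
  let b := Module.Basis.ofSpan hf.ge
  let b' := b.reindex (b.indexEquiv b₀)
  have hb (i : N) : ∃ a : k, f (b' i) = a • b' i := by
    obtain ⟨a, ha⟩ := Set.mem_iUnion.1
      (Module.Basis.ofSpan_subset hf.ge ⟨(b.indexEquiv b₀).symm i, rfl⟩)
    refine ⟨a, ?_⟩
    rw [Module.Basis.reindex_apply]
    exact Module.End.mem_eigenspace_iff.1 ha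
  choose d hd using hb
  exact ⟨b', d, hd⟩

variable {k N : Type*} [Field k] [Fintype N] [DecidableEq N]

theorem isSemisimpleMat_of_iSup_eigenspace_eq_top {x : Matrix N N k}
    (hx : ⨆ a, Module.End.eigenspace (toLin' x) a = ⊤) : IsSemisimpleMat x := by
  obtain ⟨b, d, hd⟩ := exists_eigenbasis (Pi.basisFun k N) hx
  have hinv : ((Pi.basisFun k N).toMatrix b) * b.toMatrix (Pi.basisFun k N) = 1 :=
    (Pi.basisFun k N).toMatrix_mul_toMatrix_flip b
  refine ⟨b.toMatrix (Pi.basisFun k N),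
    (Matrix.isUnit_iff_isUnit_det _).1 (.of_mul_eq_one_right _ hinv), ?_⟩
  have hdiag : LinearMap.toMatrix b b (toLin' x) = diagonal d := by
    ext i j
    rw [LinearMap.toMatrix_apply, hd, map_smul, Finsupp.smul_apply, b.repr_self, diagonal_apply]
    rcases eq_or_ne i j with rfl | hij
    · simp
    · simp [hij, Finsupp.single_eq_of_ne hij]
  rw [Matrix.inv_eq_left_inv hinv]
  convert isDiag_diagonal d
  rw [← hdiag, ← basis_toMatrix_mul_linearMap_toMatrix_mul_basis_toMatrix b (Pi.basisFun k N) b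
    (Pi.basisFun k N), LinearMap.toMatrix_eq_toMatrix', LinearMap.toMatrix'_toLin']

theorem iSup_eigenspace_toLin'_eq_top_of_isSemisimpleMat {x : Matrix N N k}
    (hx : IsSemisimpleMat x) : ⨆ a, Module.End.eigenspace (toLin' x) a = ⊤ := by
  obtain ⟨P, hP, hd⟩ := hx
  have hconj : x * P⁻¹ = P⁻¹ * diagonal (P * x * P⁻¹).diag := by
    rw [hd.diagonal_diag, mul_assoc, Matrix.nonsing_inv_mul_cancel_left _ _ hP]
  have hrange : LinearMap.range (toLin' P⁻¹) = ⊤ := by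
    rw [LinearMap.range_eq_top]
    intro v
    exact ⟨P *ᵥ v, by rw [toLin'_apply, mulVec_mulVec, nonsing_inv_mul _ hP, one_mulVec]⟩
  rw [← top_le_iff, ← hrange, LinearMap.range_eq_map,
    ← Matrix.iSup_eigenspace_toLin'_diagonal_eq_top (P * x * P⁻¹).diag, Submodule.map_iSup]
  refine iSup_mono fun a => Submodule.map_le_iff_le_comap.2 fun v hv => ?_
  rw [Module.End.mem_eigenspace_iff] at hv
  rw [Submodule.mem_comap, Module.End.mem_eigenspace_iff, ← toLin'_mul_apply,
    hconj, toLin'_mul_apply, hv, map_smul]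

end Diagonalizable

section Monomial

variable {k : Type*} [Field k] {r : ℕ}

theorem mem_GmqrSet_one_iff {M : ℕ} {w : Matrix (Fin r) (Fin r) k} :
    w ∈ GmqrSet k M 1 r ↔ ∃ (τ : Equiv.Perm (Fin r)) (z : Fin r → k), (∀ i, z i ^ M = 1) ∧
      ∀ a i, (w *ᵥ a) i = z i * a (τ i) := by
  constructor
  · rintro ⟨σ, hzero, hpow, -⟩
    refine ⟨σ.symm, fun i => w i (σ.symm i), fun i => ?_, fun a i => ?_⟩
    · simpa only [σ.apply_symm_apply] using hpow (σ.symm i)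
    · refine Finset.sum_eq_single (σ.symm i) (fun j _ hj => ?_)
        (fun h => absurd (Finset.mem_univ _) h)
      exact mul_eq_zero_of_left (hzero i j fun h => hj (by rw [h, σ.symm_apply_apply])) _
  · rintro ⟨τ, z, hz, hw⟩
    have hentry (i j : Fin r) : w i j = if τ i = j then z i else 0 := by
      simpa [Pi.single_apply] using hw (Pi.single j 1) i
    have hval (j : Fin r) : w (τ.symm j) j = z (τ.symm j) := by
      rw [hentry, if_pos (τ.apply_symm_apply j)]
    refine ⟨τ.symm, fun i j hij => ?_, fun j => (hval j).symm ▸ hz _, ?_⟩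
    · rw [hentry, if_neg fun h => hij (by rw [← h, τ.symm_apply_apply])]
    · simp only [hval, Nat.div_one, ← Finset.prod_pow, hz, Finset.prod_const_one]

end Monomial

section LittleWeylGroup

variable {k N : Type*} [Field k] [Fintype N] [DecidableEq N] {r : ℕ}

theorem forall_mul_eq_mul_iff {h : Matrix N N k} (hh : IsUnit h.det)
    {X : (Fin r → k) →ₗ[k] Matrix N N k} {w : Matrix (Fin r) (Fin r) k} :
    (∀ a, h * X a = X (w *ᵥ a) * h) ↔
      ∀ j, h * X (Pi.single j 1) * h⁻¹ = ∑ i, w i j • X (Pi.single i 1) := by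
  have hcol (j : Fin r) : X (w *ᵥ Pi.single j 1) = ∑ i, w i j • X (Pi.single i 1) := by
    simp only [← map_smul, ← map_sum]
    congr 1
    rw [mulVec_single_one]
    exact pi_eq_sum_univ' _
  constructor
  · intro hw j
    rw [hw, Matrix.mul_nonsing_inv_cancel_right _ _ hh, hcol]
  · intro hw
    refine LinearMap.congr_fun (f := LinearMap.mulLeft k h ∘ₗ X)
      (g := LinearMap.mulRight k h ∘ₗ X ∘ₗ w.mulVecLin) ((Pi.basisFun k (Fin r)).ext fun j => ?_)
    simp only [Pi.basisFun_apply, LinearMap.comp_apply, LinearMap.mulLeft_apply,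
      LinearMap.mulRight_apply, mulVecLin_apply]
    rw [hcol, ← hw, Matrix.nonsing_inv_mul_cancel_right _ _ hh]

theorem mem_littleWeylSet_range_iff {H : Set (Matrix N N k)} (hH : ∀ h ∈ H, IsUnit h.det)
    {X : (Fin r → k) →ₗ[k] Matrix N N k} (hX : Function.Injective X)
    {w : Matrix (Fin r) (Fin r) k} :
    w ∈ littleWeylSet H (LinearMap.range X) (fun i => X (Pi.single i 1)) ↔
      ∃ h ∈ H, ∀ a, h * X a = X (w *ᵥ a) * h := by
  refine exists_congr fun h => and_congr_right fun hh => ?_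
  have hdet := hH h hh
  rw [forall_mul_eq_mul_iff hdet]
  refine ⟨fun hw => hw.2.2, fun hw => ⟨?_, ?_, hw⟩⟩ <;> rw [← forall_mul_eq_mul_iff hdet] at hw
  · rintro _ ⟨a, rfl⟩
    exact ⟨w *ᵥ a, by rw [hw, Matrix.mul_nonsing_inv_cancel_right _ _ hdet]⟩
  · have hwi : Function.Injective w.mulVecLin := fun a a' haa' => hX <| by
      have heq : h * X a = h * X a' := by
        rw [hw, hw, ← mulVecLin_apply, haa', mulVecLin_apply]
      rw [← Matrix.nonsing_inv_mul_cancel_left _ (X a) hdet, heq,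
        Matrix.nonsing_inv_mul_cancel_left _ _ hdet]
    rintro _ ⟨a, rfl⟩
    obtain ⟨a', rfl⟩ := LinearMap.injective_iff_surjective.1 hwi a
    refine ⟨a', ?_⟩
    rw [mul_assoc, mulVecLin_apply, ← hw, Matrix.nonsing_inv_mul_cancel_left _ _ hdet]

end LittleWeylGroup

section Matrix

variable {k N : Type*} [Field k] [Fintype N] [DecidableEq N] {J g h x : Matrix N N k}

theorem toBilin'_toLin'_toLin'_eq_iff :
    (∀ u v, toBilin' J (toLin' h u) (toLin' h v) = toBilin' J u v) ↔ hᵀ * J * h = J := by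
  rw [← toBilin'.injective.eq_iff, ← toBilin'_comp, LinearMap.ext_iff₂]
  simp only [LinearMap.BilinForm.comp_apply]

theorem toBilin'_skew_iff :
    (∀ u v, toBilin' J (toLin' x u) v = -toBilin' J u (toLin' x v)) ↔ xᵀ * J + J * x = 0 := by
  have hl : (toBilin' J).comp (toLin' x) (toLin' 1) = toBilin' (xᵀ * J) := by
    rw [toBilin'_comp, mul_one]
  have hr : (toBilin' J).comp (toLin' 1) (toLin' x) = toBilin' (J * x) := by
    rw [toBilin'_comp, transpose_one, one_mul]
  rw [← map_eq_zero_iff _ toBilin'.injective, map_add, ← hl, ← hr, LinearMap.ext_iff₂]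
  refine forall₂_congr fun u v => ?_
  rw [eq_neg_iff_add_eq_zero]
  simp only [LinearMap.add_apply, LinearMap.zero_apply, LinearMap.BilinForm.comp_apply, toLin'_one,
    LinearMap.id_apply]

theorem isUnit_det_of_transpose_mul_mul_eq (hJ : IsUnit J.det) (hg : gᵀ * J * g = J) :
    IsUnit g.det := by
  rw [← hg, det_mul] at hJ
  exact isUnit_of_mul_isUnit_right hJ

theorem exists_eq_or_eq_neg_det_eq_one (hN : Odd (Fintype.card N)) (hJ : IsUnit J.det)
    (hg : gᵀ * J * g = J) : ∃ h, (h = g ∨ h = -g) ∧ hᵀ * J * h = J ∧ h.det = 1 := by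
  have hsq : g.det * g.det = 1 := by
    have h := congrArg det hg
    rw [det_mul, det_mul, det_transpose] at h
    exact hJ.mul_left_cancel (by linear_combination h)
  rcases mul_self_eq_one_iff.1 hsq with h | h
  · exact ⟨g, .inl rfl, hg, h⟩
  · refine ⟨-g, .inr rfl, ?_, ?_⟩
    · rwa [transpose_neg, neg_mul, neg_mul_neg]
    · rw [det_neg, hN.neg_one_pow, h, neg_mul_neg, one_mul]

theorem mul_mul_inv_eq_smul_iff (hg : IsUnit g.det) {z : k} (hz : z ≠ 0) :
    g * x * g⁻¹ = z⁻¹ • x ↔ x * g = z • (g * x) := by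
  constructor <;> intro h
  · rw [← Matrix.nonsing_inv_mul_cancel_right _ (g * x) hg, h, smul_mul_assoc,
      smul_inv_smul₀ hz]
  · rw [eq_inv_smul_iff₀ hz, ← smul_mul_assoc, ← h, Matrix.mul_nonsing_inv_cancel_right _ _ hg]

end Matrix

section CyclicGroup

variable {G M : Type*} [Group G] [Monoid M] {y : G}

theorem zpowers_induction (hy : IsOfFinOrder y) {P : Subgroup.zpowers y → Prop} (one : P 1)
    (gen_mul : ∀ η, P η → P (⟨y, Subgroup.mem_zpowers y⟩ * η)) (η : Subgroup.zpowers y) : P η := by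
  obtain ⟨n, hn⟩ := hy.mem_powers_iff_mem_zpowers.2 η.2
  obtain rfl : ⟨y, Subgroup.mem_zpowers y⟩ ^ n = η := Subtype.ext hn
  induction n with
  | zero => simpa only [pow_zero] using one
  | succ n ih =>
    rw [pow_succ']
    exact gen_mul _ (ih rfl)

theorem exists_monoidHom_zpowers (hy : IsOfFinOrder y) {f : M} (hf : f ^ orderOf y = 1) :
    ∃ φ : Subgroup.zpowers y →* M, φ ⟨y, Subgroup.mem_zpowers y⟩ = f := by
  let u := Units.ofPowEqOne f _ hf hy.orderOf_pos.ne'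
  let y' : Subgroup.zpowers y := ⟨y, Subgroup.mem_zpowers y⟩
  have hy' (η : Subgroup.zpowers y) : η ∈ Subgroup.zpowers y' := by
    obtain ⟨_, n, rfl⟩ := η
    exact ⟨n, rfl⟩
  have hu : orderOf u ∣ orderOf y' := by
    rw [Subgroup.orderOf_mk]
    exact orderOf_dvd_of_pow_eq_one (Units.pow_ofPowEqOne hf _)
  exact ⟨(Units.coeHom M).comp (monoidHomOfForallMemZpowers hy' hu), by
    rw [MonoidHom.comp_apply, monoidHomOfForallMemZpowers_apply_gen]; rfl⟩

end CyclicGroup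

section CyclicRepresentation

variable {k V Γ : Type*} [Field k] [AddCommGroup V] [Module k V] [CommGroup Γ] {y : Γ}
  {ρ : Representation k (Subgroup.zpowers y) V} {B : LinearMap.BilinForm k V} {χ : Γ →* k}

theorem forall_rep_isometry (hy : IsOfFinOrder y)
    (hgen : ∀ u v, B (ρ ⟨y, Subgroup.mem_zpowers y⟩ u) (ρ ⟨y, Subgroup.mem_zpowers y⟩ v) = B u v)
    (η : Subgroup.zpowers y) (u v : V) : B (ρ η u) (ρ η v) = B u v := by
  induction η using zpowers_induction hy with
  | one => rw [map_one, Module.End.one_apply, Module.End.one_apply]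
  | gen_mul η ih => rw [map_mul, Module.End.mul_apply, Module.End.mul_apply, hgen, ih]

theorem forall_apply_rep_eq_smul (hy : IsOfFinOrder y) {x : Module.End k V}
    (hgen : ∀ v, x (ρ ⟨y, Subgroup.mem_zpowers y⟩ v) =
      χ y • ρ ⟨y, Subgroup.mem_zpowers y⟩ (x v))
    (η : Subgroup.zpowers y) (v : V) : x (ρ η v) = χ η • ρ η (x v) := by
  induction η using zpowers_induction hy with
  | one => simp only [map_one, Module.End.one_apply, OneMemClass.coe_one, one_smul]
  | gen_mul η ih =>
    rw [map_mul, Module.End.mul_apply, hgen, ih, map_smul, smul_smul, Subgroup.coe_mul, map_mul,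
      Module.End.mul_apply]

end CyclicRepresentation

section Matrix

variable {k N Γ : Type*} [Field k] [Fintype N] [DecidableEq N] [CommGroup Γ] {χ : Γ →* k}
  {J : Matrix N N k}

theorem toLin'_mem_skewTwisted_iff {y : Γ} {ρ : Representation k (Subgroup.zpowers y) (N → k)}
    (hy : IsOfFinOrder y) {g : Matrix N N k} (hg : IsUnit g.det)
    (hρ : ρ ⟨y, Subgroup.mem_zpowers y⟩ = toLin' g) {x : Matrix N N k} :
    toLin' x ∈ skewTwisted (toBilin' J) χ ρ ↔
      xᵀ * J + J * x = 0 ∧ g * x * g⁻¹ = (χ y)⁻¹ • x := by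
  have hχy : χ y ≠ 0 := ((Group.isUnit y).map χ).ne_zero
  have hgen : x * g = χ y • (g * x) ↔
      ∀ v, toLin' x (ρ ⟨y, Subgroup.mem_zpowers y⟩ v) =
        χ y • ρ ⟨y, Subgroup.mem_zpowers y⟩ (toLin' x v) := by
    rw [hρ, ← toLin'.injective.eq_iff, LinearMap.ext_iff]
    simp only [toLin'_mul, map_smul, LinearMap.comp_apply, LinearMap.smul_apply]
  rw [mul_mul_inv_eq_smul_iff hg hχy, hgen, ← toBilin'_skew_iff]
  exact and_congr_right fun _ => ⟨fun h => h _, forall_apply_rep_eq_smul hy⟩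

variable [HasDistribNeg Γ] [Fintype Γ] [DecidableEq Γ] {A : Subgroup Γ}
  {ρ : Representation k A (N → k)}

theorem IsWeightFrame.range_cartanMap_eq {ι : Type*} [Fintype ι]
    {g1 : Set (Matrix N N k)} {c : Submodule k (Matrix N N k)} (hc : IsCartanSubspace g1 c)
    (hg1 : ∀ x, x ∈ g1 ↔ toLin' x ∈ skewTwisted (toBilin' J) χ ρ) (hJ : J.IsSymm)
    (hχ : ∀ ω, χ (-ω) = -χ ω)
    (hρ : ∀ η u v, toBilin' J (ρ η u) (ρ η v) = toBilin' J u v) {e : ι × Γ → N → k}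
    (he : IsWeightFrame (toBilin' J) χ ρ (toLin' '' c) e)
    (hkill : ∀ x ∈ c, ∀ v ∈ rangeOrthogonal (toBilin' J) e, toLin' x v = 0) :
    LinearMap.range (LinearMap.toMatrix'.toLinearMap ∘ₗ cartanMap (toBilin' J) χ e) = c := by
  classical
  have hB : (toBilin' J).IsRefl := (isSymm_toBilin'_iff_isSymm.2 hJ).isRefl
  refine hc.2.2.2 _ ⟨?_, ?_, ?_⟩ fun x hx => ?_
  · rintro _ ⟨a, rfl⟩
    rw [hg1]
    simpa using he.cartanMap_mem_skewTwisted hB hχ hρ a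
  · rintro _ ⟨a, rfl⟩ _ ⟨a', rfl⟩
    simpa [LinearMap.toMatrix'_mul] using congrArg LinearMap.toMatrix'
      (he.isPairedBy.cartanMap_commute (χ := χ) a a').eq
  · rintro _ ⟨a, rfl⟩
    refine isSemisimpleMat_of_iSup_eigenspace_eq_top ?_
    simpa using he.isPairedBy.iSup_eigenspace_cartanMap (χ := χ) a
  · obtain ⟨a, ha⟩ := he.subset_range_cartanMap (Set.forall_mem_image.2 hkill) ⟨x, hx, rfl⟩
    exact ⟨a, by simp [ha]⟩

theorem IsCartanSubspace.exists_range_cartanMap_eq {g1 : Set (Matrix N N k)}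
    {c : Submodule k (Matrix N N k)} (hc : IsCartanSubspace g1 c)
    (hg1 : ∀ x, x ∈ g1 ↔ toLin' x ∈ skewTwisted (toBilin' J) χ ρ) (hJ : J.IsSymm)
    (hJdet : IsUnit J.det) (hχ : ∀ ω, χ (-ω) = -χ ω) (hχi : Function.Injective χ)
    (h2 : (2 : k) ≠ 0) (hA : ∀ ω, ω ∈ A ∨ -ω ∈ A) (hsq : -1 ∈ A → ∀ a : k, IsSquare a)
    (hρ : ∀ η u v, toBilin' J (ρ η u) (ρ η v) = toBilin' J u v) :
    ∃ (s : ℕ) (e : Fin s × Γ → N → k), IsWeightFrame (toBilin' J) χ ρ (toLin' '' c) e ∧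
      LinearMap.range (LinearMap.toMatrix'.toLinearMap ∘ₗ cartanMap (toBilin' J) χ e) = c := by
  have htop : ⨆ lam, jointEigenspace (k := k) (V := N → k) (toLin' '' c) lam = ⊤ := by
    refine iSup_jointEigenspace_eq_top ?_ ?_ <;> simp only [Set.forall_mem_image]
    · intro x hx y hy
      rw [commute_iff_eq, Module.End.mul_eq_comp, Module.End.mul_eq_comp, ← toLin'_mul,
        ← toLin'_mul, hc.2.1 x hx y hy]
    · exact fun x hx => iSup_eigenspace_toLin'_eq_top_of_isSemisimpleMat (hc.2.2.1 x hx)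
  obtain ⟨s, e, he, hkill⟩ := exists_isWeightFrame hχ hχi h2 hA hsq
    (isSymm_toBilin'_iff_isSymm.2 hJ)
    (LinearMap.BilinForm.nondegenerate_toBilin'_iff_det_ne_zero.2 hJdet.ne_zero) hρ
    (Set.image_subset_iff.2 fun x hx => (hg1 x).1 (hc.1 hx)) htop
  exact ⟨s, e, he, he.range_cartanMap_eq hc hg1 hJ hχ hρ (Set.forall_mem_image.1 hkill)⟩

theorem bijective_toLin'_of_isUnit_det {h : Matrix N N k} (hh : IsUnit h.det) :
    Function.Bijective (toLin' h) :=
  ⟨mulVec_injective_iff_isUnit.2 ((isUnit_iff_isUnit_det h).2 hh),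
    mulVec_surjective_iff_isUnit.2 ((isUnit_iff_isUnit_det h).2 hh)⟩

theorem mul_toMatrix'_eq_iff {h : Matrix N N k} {D D' : Module.End k (N → k)} :
    h * LinearMap.toMatrix' D = LinearMap.toMatrix' D' * h ↔ toLin' h * D = D' * toLin' h := by
  rw [← toLin'.injective.eq_iff, toLin'_mul, toLin'_mul, toLin'_toMatrix', toLin'_toMatrix']
  rfl

theorem IsWeightFrame.littleWeylSet_eq_GmqrSet {s M : ℕ} (hN : Odd (Fintype.card N)) (hJ : J.IsSymm)
    (hJdet : IsUnit J.det) (hχ : ∀ ω, χ (-ω) = -χ ω) (hM : ∀ z, z ^ M = 1 ↔ ∃ ω, χ ω = z)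
    (hρ : ∀ η u v, toBilin' J (ρ η u) (ρ η v) = toBilin' J u v) {g : Matrix N N k} {η₀ : A}
    (hg : ρ η₀ = toLin' g) {C : Set (Module.End k (N → k))} {e : Fin s × Γ → N → k}
    (he : IsWeightFrame (toBilin' J) χ ρ C e) :
    littleWeylSet {h | hᵀ * J * h = J ∧ h.det = 1 ∧ h * g = g * h}
      (LinearMap.range (LinearMap.toMatrix'.toLinearMap ∘ₗ cartanMap (toBilin' J) χ e))
      (fun i => LinearMap.toMatrix' (cartanMap (toBilin' J) χ e (Pi.single i 1))) =
    GmqrSet k M 1 s := by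
  have hB : (toBilin' J).IsRefl := (isSymm_toBilin'_iff_isSymm.2 hJ).isRefl
  ext w
  rw [mem_GmqrSet_one_iff]
  refine (mem_littleWeylSet_range_iff (fun h hh => hh.2.1 ▸ isUnit_one)
    (LinearMap.toMatrix'.injective.comp he.isPairedBy.cartanMap_injective)).trans ⟨?_, ?_⟩
  · rintro ⟨h, ⟨-, hdet, -⟩, hw⟩
    obtain ⟨τ, α, hτ⟩ := he.isPairedBy.exists_perm_of_cartanMap_conj hB hχ
      (bijective_toLin'_of_isUnit_det (hdet ▸ isUnit_one)) (w := w.mulVecLin) fun a =>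
        mul_toMatrix'_eq_iff.1 (hw a)
    exact ⟨τ, fun i => χ (α i), fun i => (hM _).2 ⟨α i, rfl⟩, hτ⟩
  · rintro ⟨τ, z, hz, hw⟩
    choose α hα using fun i => (hM (z i)).1 (hz i)
    obtain ⟨T, hTB, hTρ, hTw⟩ := he.exists_isometry_of_perm (w := (w *ᵥ ·)) hB hρ fun a i =>
      (hw a i).trans (by rw [hα])
    have hTJ : (LinearMap.toMatrix' T)ᵀ * J * LinearMap.toMatrix' T = J := by
      rw [← toBilin'_toLin'_toLin'_eq_iff, toLin'_toMatrix']
      exact LinearMap.congr_fun₂ hTB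
    have hTg : LinearMap.toMatrix' T * g = g * LinearMap.toMatrix' T := by
      rw [← LinearMap.toMatrix'_toLin' g, ← hg, ← LinearMap.toMatrix'_mul, (hTρ η₀).eq,
        LinearMap.toMatrix'_mul]
    have hTX (a : Fin s → k) := congrArg LinearMap.toMatrix' (hTw a)
    simp only [LinearMap.toMatrix'_mul] at hTX
    obtain ⟨h, rfl | rfl, hhJ, hdet⟩ := exists_eq_or_eq_neg_det_eq_one hN hJdet hTJ
    · exact ⟨_, ⟨hhJ, hdet, hTg⟩, hTX⟩
    · exact ⟨_, ⟨hhJ, hdet, by rw [neg_mul, mul_neg, hTg]⟩,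
        fun a => by rw [neg_mul, mul_neg]; exact congrArg _ (hTX a)⟩

end Matrix

theorem exists_basis_littleWeylSet_eq_GmqrSet {k N Γ : Type*} [Field k] [Fintype N] [DecidableEq N]
    [CommGroup Γ] [HasDistribNeg Γ] [Finite Γ] {χ : Γ →* k}
    (hχ : ∀ ω, χ (-ω) = -χ ω) (hχi : Function.Injective χ) {M : ℕ}
    (hM : ∀ z, z ^ M = 1 ↔ ∃ ω, χ ω = z) (h2 : (2 : k) ≠ 0) {y : Γ}
    (hy : ∀ ω, ω ∈ Subgroup.zpowers y ∨ -ω ∈ Subgroup.zpowers y)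
    (hsq : -1 ∈ Subgroup.zpowers y → ∀ a : k, IsSquare a) (hN : Odd (Fintype.card N))
    {J g : Matrix N N k} (hJ : J.IsSymm) (hJdet : IsUnit J.det) (hg : gᵀ * J * g = J)
    (hgy : g ^ orderOf y = 1) {c : Submodule k (Matrix N N k)}
    (hc : IsCartanSubspace {x | xᵀ * J + J * x = 0 ∧ g * x * g⁻¹ = (χ y)⁻¹ • x} c) {r : ℕ}
    (hr : Module.finrank k c = r) :
    ∃ b : Fin r → Matrix N N k, LinearIndependent k b ∧ Submodule.span k (Set.range b) = c ∧
      littleWeylSet {h | hᵀ * J * h = J ∧ h.det = 1 ∧ h * g = g * h} c b = GmqrSet k M 1 r := by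
  classical
  cases nonempty_fintype Γ
  have hyfin : IsOfFinOrder y := isOfFinOrder_of_finite y
  obtain ⟨ρ, hρy⟩ := exists_monoidHom_zpowers (f := toLin' g) hyfin
    (by rw [← toLin'_pow, hgy, toLin'_one, Module.End.one_eq_id])
  have hρ := forall_rep_isometry (B := toBilin' J) (ρ := ρ) hyfin
    (by rwa [hρy, toBilin'_toLin'_toLin'_eq_iff])
  obtain ⟨s, e, he, rfl⟩ := hc.exists_range_cartanMap_eq
    (fun x => (toLin'_mem_skewTwisted_iff hyfin (isUnit_det_of_transpose_mul_mul_eq hJdet hg)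
      hρy).symm) hJ hJdet hχ hχi h2 hy hsq hρ
  have hX : Function.Injective
      (LinearMap.toMatrix'.toLinearMap ∘ₗ cartanMap (toBilin' J) χ e) :=
    LinearMap.toMatrix'.injective.comp he.isPairedBy.cartanMap_injective
  rw [LinearMap.finrank_range_of_inj hX, Module.finrank_fin_fun] at hr
  subst hr
  refine ⟨_, (Pi.basisFun k (Fin s)).linearIndependent.map' _ (LinearMap.ker_eq_bot.2 hX), ?_, ?_⟩
  · rw [Set.range_comp, Submodule.span_image, Module.Basis.span_eq, LinearMap.range_eq_map]
  · simp only [Function.comp_def, Pi.basisFun_apply]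
    exact he.littleWeylSet_eq_GmqrSet hN hJ hJdet hχ hM hρ hρy

section RootsOfUnity

variable {k : Type*} [Field k] {M : ℕ}

/-- Negation on the `M`-th roots of unity for even `M`. -/
@[reducible]
def rootsOfUnityHasDistribNeg (k : Type*) [Field k] {M : ℕ} (hM : Even M) :
    HasDistribNeg (rootsOfUnity M k) :=
  letI : Neg (rootsOfUnity M k) := ⟨fun ω => ⟨-ω, by
    rw [mem_rootsOfUnity, hM.neg_pow, ← mem_rootsOfUnity]
    exact ω.2⟩⟩
  Subtype.val_injective.hasDistribNeg _ (fun _ => rfl) fun _ _ => rfl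

/-- The inclusion of the roots of unity, as a character. -/
def rootsOfUnityCharacter (k : Type*) [Field k] (M : ℕ) : rootsOfUnity M k →* k :=
  (Units.coeHom k).comp (rootsOfUnity M k).subtype

theorem rootsOfUnityCharacter_injective : Function.Injective (rootsOfUnityCharacter k M) :=
  Units.val_injective.comp Subtype.val_injective

theorem pow_eq_one_iff_exists_rootsOfUnityCharacter_eq [NeZero M] {z : k} :
    z ^ M = 1 ↔ ∃ ω, rootsOfUnityCharacter k M ω = z := by
  refine ⟨fun hz => ⟨rootsOfUnity.mkOfPowEq z hz, rfl⟩, ?_⟩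
  rintro ⟨ω, rfl⟩
  exact (mem_rootsOfUnity' _ _).1 ω.2

theorem orderOf_eq_of_rootsOfUnityCharacter_eq {m : ℕ} {z : k} (hz : IsPrimitiveRoot z m)
    {y : rootsOfUnity M k} (hy : rootsOfUnityCharacter k M y = z) : orderOf y = m := by
  rw [← orderOf_injective _ rootsOfUnityCharacter_injective, hy, hz.eq_orderOf]

theorem mem_zpowers_iff_rootsOfUnityCharacter_pow_eq_one {m : ℕ} [NeZero m] {z : k}
    (hz : IsPrimitiveRoot z m) {y : rootsOfUnity M k} (hy : rootsOfUnityCharacter k M y = z)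
    {ω : rootsOfUnity M k} :
    ω ∈ Subgroup.zpowers y ↔ rootsOfUnityCharacter k M ω ^ m = 1 := by
  constructor
  · rintro ⟨j, rfl⟩
    rw [← map_pow, ← orderOf_eq_of_rootsOfUnityCharacter_eq hz hy, ← zpow_natCast,
      zpow_comm, zpow_natCast, pow_orderOf_eq_one, _root_.one_zpow, map_one]
  · intro h
    obtain ⟨j, -, hj⟩ := hz.eq_pow_of_pow_eq_one h
    exact ⟨j, rootsOfUnityCharacter_injective (by simpa [hy] using hj)⟩

theorem pow_eq_one_or_neg_pow_eq_one_of_pow_lcm_two_eq_one {m : ℕ} {z : k}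
    (hz : z ^ Nat.lcm 2 m = 1) : z ^ m = 1 ∨ (-z) ^ m = 1 := by
  rcases m.even_or_odd with hm | hm
  · rw [Nat.lcm_eq_right hm.two_dvd] at hz
    exact .inl hz
  · rw [(Nat.coprime_two_left.2 hm).lcm_eq_mul, mul_comm, pow_mul] at hz
    rw [hm.neg_pow, neg_eq_iff_eq_neg]
    exact mul_self_eq_one_iff.1 (by rwa [← pow_two])

end RootsOfUnity

theorem even_of_neg_one_pow_eq_one {k : Type*} [Field k] (h2 : (2 : k) ≠ 0) {m : ℕ}
    (h : (-1 : k) ^ m = 1) : Even m := by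
  by_contra hm
  rw [Nat.not_even_iff_odd] at hm
  rw [hm.neg_one_pow] at h
  exact h2 (by linear_combination -h)

theorem stmt12_general {k : Type*} [Field k] (h2 : (2 : k) ≠ 0) {m : ℕ} (hm : 0 < m)
    (hsq : Even m → ∀ a : k, IsSquare a) {ζ : k} (hζ : IsPrimitiveRoot ζ m) {N : Type*}
    [Fintype N] [DecidableEq N] (hN : Odd (Fintype.card N)) {J g : Matrix N N k} (hJ : J.IsSymm)
    (hJdet : IsUnit J.det) (hg : gᵀ * J * g = J) (hgm : g ^ m = 1)
    {c : Submodule k (Matrix N N k)}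
    (hc : IsCartanSubspace {x | xᵀ * J + J * x = 0 ∧ g * x * g⁻¹ = ζ • x} c) {r : ℕ}
    (hr : Module.finrank k c = r) :
    ∃ b : Fin r → Matrix N N k, LinearIndependent k b ∧ Submodule.span k (Set.range b) = c ∧
      littleWeylSet {h | hᵀ * J * h = J ∧ h.det = 1 ∧ h * g = g * h} c b =
        GmqrSet k (Nat.lcm 2 m) 1 r := by
  have : NeZero m := ⟨hm.ne'⟩
  have : NeZero (Nat.lcm 2 m) := ⟨Nat.lcm_ne_zero two_ne_zero hm.ne'⟩
  let := rootsOfUnityHasDistribNeg k (even_iff_two_dvd.2 (Nat.dvd_lcm_left 2 m))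
  obtain ⟨y, hy⟩ := pow_eq_one_iff_exists_rootsOfUnityCharacter_eq.1
    ((hζ.inv.pow_eq_one_iff_dvd _).2 (Nat.dvd_lcm_right 2 m))
  have hmem (ω) := mem_zpowers_iff_rootsOfUnityCharacter_pow_eq_one hζ.inv hy (ω := ω)
  refine exists_basis_littleWeylSet_eq_GmqrSet (χ := rootsOfUnityCharacter k (Nat.lcm 2 m))
    (fun ω => rfl) rootsOfUnityCharacter_injective
    (fun z => pow_eq_one_iff_exists_rootsOfUnityCharacter_eq) h2 (y := y) (fun ω => ?_)
    (fun h => hsq (even_of_neg_one_pow_eq_one h2 ((hmem _).1 h))) hN hJ hJdet hg ?_ ?_ hr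
  · rw [hmem, hmem]
    exact pow_eq_one_or_neg_pow_eq_one_of_pow_lcm_two_eq_one
      (pow_eq_one_iff_exists_rootsOfUnityCharacter_eq.2 ⟨ω, rfl⟩)
  · rwa [orderOf_eq_of_rootsOfUnityCharacter_eq hζ.inv hy]
  · rwa [hy, inv_inv]

section AntidiagJ

variable {k : Type*} [Field k]

theorem antidiagJ_eq_permMatrix (N : ℕ) : antidiagJ k N = Fin.revPerm.permMatrix k := by
  ext i j
  rw [antidiagJ, of_apply, Equiv.Perm.permMatrix, PEquiv.toMatrix_apply]
  refine if_congr ?_ rfl rfl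
  rw [Equiv.toPEquiv_apply, Option.mem_some_iff, Fin.revPerm_apply, Fin.ext_iff, Fin.val_rev]
  lia

theorem isSymm_antidiagJ (N : ℕ) : (antidiagJ k N).IsSymm :=
  IsSymm.ext fun i j => by rw [antidiagJ, of_apply, of_apply, add_comm]

theorem isUnit_det_antidiagJ (N : ℕ) : IsUnit (antidiagJ k N).det := by
  rw [antidiagJ_eq_permMatrix, det_permutation]
  exact (Equiv.Perm.sign _).isUnit.map (Int.castRingHom k)

end AntidiagJ

/-- little Weyl group of an inner automorphism of `SO(2n+1,k)`
of order exactly `m`: with respect to a suitable basis of a Cartan subspace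
`c` (of dimension `r`) it equals `G(2m,1,r)` if `m` is odd and `G(m,1,r)` if
`m` is even. -/
theorem stmt12 {k : Type*} [Field k] [IsAlgClosed k]
    (hchar : ringChar k = 0 ∨ 2 < ringChar k)
    (m : ℕ) (hm : 0 < m) (hmchar : ¬ (ringChar k ∣ m))
    (ζ : k) (hζ : IsPrimitiveRoot ζ m)
    (n : ℕ) (g : Matrix (Fin (2 * n + 1)) (Fin (2 * n + 1)) k)
    (hgO : g.transpose * antidiagJ k (2 * n + 1) * g = antidiagJ k (2 * n + 1))
    (hgdet : g.det = 1)
    (hordm : g ^ m = 1)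
    (hordleast : ∀ j : ℕ, 0 < j → j < m → g ^ j ≠ 1)
    (c : Submodule k (Matrix (Fin (2 * n + 1)) (Fin (2 * n + 1)) k))
    (hc : IsCartanSubspace
      {x | x.transpose * antidiagJ k (2 * n + 1) + antidiagJ k (2 * n + 1) * x = 0 ∧
        g * x * g⁻¹ = ζ • x} c)
    (r : ℕ) (hr : Module.finrank k c = r) :
    ∃ b : Fin r → Matrix (Fin (2 * n + 1)) (Fin (2 * n + 1)) k,
      LinearIndependent k b ∧ Submodule.span k (Set.range b) = c ∧
      (Odd m →
        littleWeylSet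
          {h | h.transpose * antidiagJ k (2 * n + 1) * h = antidiagJ k (2 * n + 1) ∧
            h.det = 1 ∧ h * g = g * h} c b = GmqrSet k (2 * m) 1 r) ∧
      (Even m →
        littleWeylSet
          {h | h.transpose * antidiagJ k (2 * n + 1) * h = antidiagJ k (2 * n + 1) ∧
            h.det = 1 ∧ h * g = g * h} c b = GmqrSet k m 1 r) := by
  have h2 : (2 : k) ≠ 0 := Ring.two_ne_zero (by lia)
  have hsq (a : k) : IsSquare a := IsAlgClosed.exists_eq_mul_self a
  have hodd : Odd (Fintype.card (Fin (2 * n + 1))) := by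
    rw [Fintype.card_fin]
    exact odd_two_mul_add_one n
  obtain ⟨b, hb, hspan, hW⟩ := stmt12_general h2 hm (fun _ => hsq) hζ hodd (isSymm_antidiagJ _)
    (isUnit_det_antidiagJ _) hgO hordm hc hr
  refine ⟨b, hb, hspan, fun hmo => ?_, fun hme => ?_⟩
  · rw [hW, (Nat.coprime_two_left.2 hmo).lcm_eq_mul]
  · rw [hW, Nat.lcm_eq_right hme.two_dvd]
end
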